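/- arXiv:1712.09256 — 11 statements merged into one kernel-verified Lean document; each statement's English description precedes it below -/
import Mathlib

section
/- For every real number b > 2/9 there exist real numbers a and c with a < 0, c < 0, a + c = 1/3 − 2b, −b − 1/6 ≤ a ≤ −b + 1/3, −b ≤ c ≤ −b + 1/2, and 3b(a + c) + 2b² − 8ac < 0. -/
/-- For every `b > 2/9` there exist admissible dispersion-like parameters `(a, c)`. -/
theorem stmt_1 (b : ℝ) (hb : b > 2/9) :
    ∃ a c : ℝ, a < 0 ∧ c < 0 ∧ a + c = 1/3 - 2*b ∧
      -b - 1/6 ≤ a ∧ a ≤ -b + 1/3 ∧ -b ≤ c ∧ c ≤ -b + 1/2 ∧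
      3*b*(a + c) + 2*b^2 - 8*a*c < 0 := by
  -- With `a + c` fixed, `a * c` is largest at `a = c = 1/6 - b`; there the last expression
  -- equals `-(9 * b - 2) * (12 * b - 1) / 9`.
  refine ⟨1/6 - b, 1/6 - b, by linarith, by linarith, by ring, by linarith, by linarith,
    by linarith, by linarith, ?_⟩
  have h : 0 < (9 * b - 2) * (12 * b - 1) := mul_pos (by linarith) (by linarith)
  linarith
end

section
/- Let a < 0 and c < 0 be real numbers. The following are equivalent: (i) there exist real numbers α and β such that β − α − 3a/2 > 0, α − β − 3c/2 > 0, (1 − a)(β − α) − 2a − 1/2 > 0, (1 − c)(α − β) − 2c − 1/2 > 0, a(α − β − 1/2) > 0, and c(β − α − 1/2) > 0; (ii) 3(a + c) + 2 − 8ac < 0. -/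
/-!
All six conditions depend only on `t = β - α`. With `p x = (4 x + 1) / (2 (1 - x))`, the third and
fourth say `p a < t` and `t < -p c`, and the last two say `-1/2 < t < 1/2`. For negative `a`, `c`
the first two follow from the third and fourth, because `3 x / 2 < p x` amounts to
`0 < 3 x ^ 2 + x + 1`. So a suitable `t` exists iff
`max (p a) (-1/2) < min (-p c) (1/2)`. As `p x < 1/2` for `x < 0`, this reduces to
`p a + p c < 0`, which after clearing the positive denominators is `3 (a + c) + 2 - 8 a c < 0`.
-/

/-- Positivity of the virial coefficients `A₂, B₂, A₃, B₃, A₄, B₄` for some `(α, β)`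
is equivalent to the dispersion-like condition `3(a+c) + 2 - 8ac < 0`. -/
theorem stmt_2 (a c : ℝ) (ha : a < 0) (hc : c < 0) :
    (∃ α β : ℝ,
      β - α - 3*a/2 > 0 ∧
      α - β - 3*c/2 > 0 ∧
      (1 - a)*(β - α) - 2*a - 1/2 > 0 ∧
      (1 - c)*(α - β) - 2*c - 1/2 > 0 ∧
      a*(α - β - 1/2) > 0 ∧
      c*(β - α - 1/2) > 0) ↔
    3*(a + c) + 2 - 8*a*c < 0 := by
  have ha1 : 0 < 1 - a := by linarith
  have hc1 : 0 < 1 - c := by linarith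
  constructor
  · rintro ⟨α, β, -, -, h3, h4, -, -⟩
    -- `(1 - c) A₃ + (1 - a) B₃` no longer involves `β - α`
    have h5 := mul_pos hc1 h3
    have h6 := mul_pos ha1 h4
    linarith
  · intro h
    have hmid : max ((4*a + 1)/(2*(1 - a))) (-1/2) < min (-(4*c + 1)/(2*(1 - c))) (1/2) := by
      refine max_lt (lt_min ?_ ?_) (lt_min ?_ (by norm_num))
      · rw [div_lt_div_iff₀ (by linarith) (by linarith)]
        linarith
      · rw [div_lt_div_iff₀ (by linarith) (by norm_num)]
        linarith
      · rw [div_lt_div_iff₀ (by norm_num) (by linarith)]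
        linarith
    obtain ⟨t, hl, hu⟩ := exists_between hmid
    obtain ⟨hl1, hl2⟩ := max_lt_iff.1 hl
    obtain ⟨hu1, hu2⟩ := lt_min_iff.1 hu
    rw [div_lt_iff₀ (by linarith)] at hl1
    rw [lt_div_iff₀ (by linarith)] at hu1
    refine ⟨0, t, ?_, ?_, by linarith, by linarith,
      mul_pos_of_neg_of_neg ha (by linarith), mul_pos_of_neg_of_neg hc (by linarith)⟩
    · have : 0 < (1 - a) * (t - 3*a/2) := by nlinarith [sq_nonneg (6*a + 1)]
      linarith [pos_of_mul_pos_right this ha1.le]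
    · have : 0 < (1 - c) * (-t - 3*c/2) := by nlinarith [sq_nonneg (6*c + 1)]
      linarith [pos_of_mul_pos_right this hc1.le]
end

section
/- Let f : ℝ → ℝ be a Schwartz function, set u := f − f'', and let φ : ℝ → ℝ be a smooth function all of whose derivatives (including φ itself) are bounded. Then the following three identities hold: (1) ∫ φ' u² = ∫ φ'(f² + 2(f')² + (f'')²) − ∫ φ''' f²; (2) ∫ φ' (u')² = ∫ φ'((f')² + 2(f'')² + (f''')²) − ∫ φ''' (f')²; (3) ∫ φ' u f = ∫ φ'(f² + (f')²) − (1/2)∫ φ''' f². -/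
/-!
Expanding `u = f - f''` in each integrand leaves a single cross term `∫ φ' g g''`, with `g = f` for
the first and third identities and `g = f'` for the second. It is removed by `integral_cross_term`:
for a weight `p` one has the pointwise identity
`(p g g' - p' g² / 2)' = p (g')² + p g g'' - p'' g² / 2`,
and the integral of the left side vanishes. Every integral that occurs converges because
it is that of a bounded continuous weight times a product of two Schwartz functions
(`integrable_weight_mul`), so the integrals may be split freely.
-/

open MeasureTheory SchwartzMap

/-- A bounded continuous weight times a product of two Schwartz functions is integrable. -/
lemma integrable_weight_mul {p : ℝ → ℝ} (hp : Continuous p) (hb : ∃ C : ℝ, ∀ x, |p x| ≤ C)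
    (g h : 𝓢(ℝ, ℝ)) : Integrable (fun x => p x * (g x * h x)) := by
  obtain ⟨C, hC⟩ := hb
  obtain ⟨D, -, hD⟩ := g.decay 0 0
  have hgb : ∀ x, |g x| ≤ D := fun x => by simpa using hD x
  have key : Integrable (fun x => (p x * g x) * h x) := by
    refine h.integrable.bdd_mul (c := C * D) (hp.mul g.continuous).aestronglyMeasurable
      (Filter.Eventually.of_forall fun x => ?_)
    rw [Real.norm_eq_abs, abs_mul]
    exact mul_le_mul (hC x) (hgb x) (abs_nonneg _) ((abs_nonneg _).trans (hC x))
  simpa only [mul_assoc] using key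

lemma hasDerivAt_schwartz (g : 𝓢(ℝ, ℝ)) (x : ℝ) :
    HasDerivAt g (derivCLM ℝ ℝ g x) x := by
  simpa using g.differentiableAt.hasDerivAt

/-- The cross term `p g g''`, integrated by parts twice: once to split a derivative off `g''`, and once
more because `2 g g' = (g²)'`. -/
lemma integral_cross_term {p q r : ℝ → ℝ} (hpq : ∀ x, HasDerivAt p (q x) x)
    (hqr : ∀ x, HasDerivAt q (r x) x) (hr : Continuous r)
    (bp : ∃ C : ℝ, ∀ x, |p x| ≤ C) (bq : ∃ C : ℝ, ∀ x, |q x| ≤ C)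
    (br : ∃ C : ℝ, ∀ x, |r x| ≤ C) (g : 𝓢(ℝ, ℝ)) :
    ∫ x, p x * (g x * derivCLM ℝ ℝ (derivCLM ℝ ℝ g) x)
      = (1/2) * (∫ x, r x * (g x * g x))
        - ∫ x, p x * (derivCLM ℝ ℝ g x * derivCLM ℝ ℝ g x) := by
  have hp : Continuous p := continuous_iff_continuousAt.2 fun x => (hpq x).continuousAt
  have hq : Continuous q := continuous_iff_continuousAt.2 fun x => (hqr x).continuousAt
  set g1 := derivCLM ℝ ℝ g with hg1
  set g2 := derivCLM ℝ ℝ g1 with hg2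
  have i0 := integrable_weight_mul hp bp g g1
  have i1 := (integrable_weight_mul hq bq g g).const_mul (1/2)
  have i2 := integrable_weight_mul hp bp g1 g1
  have i3 := integrable_weight_mul hp bp g g2
  have i4 := (integrable_weight_mul hr br g g).const_mul (1/2)
  have hz := integral_eq_zero_of_hasDerivAt_of_integrable
    (f := fun x => p x * (g x * g1 x) - (1/2) * (q x * (g x * g x)))
    (f' := fun x => p x * (g x * g2 x) + p x * (g1 x * g1 x) - (1/2) * (r x * (g x * g x)))
    (fun x => by
      have d0 := hasDerivAt_schwartz g x
      have d1 := hasDerivAt_schwartz g1 x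
      refine (((hpq x).mul (d0.mul d1)).sub
        (((hqr x).mul (d0.mul d0)).const_mul (1/2))).congr_deriv ?_
      simp only [← hg1, ← hg2, Pi.mul_apply]
      ring)
    ((i3.add i2).sub i4) (i0.sub i1)
  have i32 : Integrable (fun x => p x * (g x * g2 x) + p x * (g1 x * g1 x)) := i3.add i2
  rw [integral_sub i32 i4, integral_add i3 i2, integral_const_mul] at hz
  linarith

/-- Virial identities in canonical variables: for a Schwartz function `f`,
`u := f - f''`, and a smooth weight `φ` with bounded derivatives,
(1) `∫ φ' u² = ∫ φ'(f² + 2 f'² + f''²) - ∫ φ''' f²`,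
(2) `∫ φ' u'² = ∫ φ'(f'² + 2 f''² + f'''²) - ∫ φ''' f'²`,
(3) `∫ φ' u f = ∫ φ'(f² + f'²) - (1/2) ∫ φ''' f²`. -/
theorem stmt_7 (f : 𝓢(ℝ, ℝ)) (φ : ℝ → ℝ)
    (hφ : ContDiff ℝ (⊤ : ℕ∞) φ)
    (hbd : ∀ n : ℕ, ∃ C : ℝ, ∀ x : ℝ, |iteratedDeriv n φ x| ≤ C)
    (u : ℝ → ℝ) (hu : ∀ x, u x = f x - deriv (deriv (f : ℝ → ℝ)) x) :
    ((∫ x : ℝ, deriv φ x * (u x)^2)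
      = (∫ x : ℝ, deriv φ x * ((f x)^2 + 2*(deriv (f : ℝ → ℝ) x)^2
          + (deriv (deriv (f : ℝ → ℝ)) x)^2))
        - ∫ x : ℝ, deriv (deriv (deriv φ)) x * (f x)^2)
  ∧ ((∫ x : ℝ, deriv φ x * (deriv u x)^2)
      = (∫ x : ℝ, deriv φ x * ((deriv (f : ℝ → ℝ) x)^2
          + 2*(deriv (deriv (f : ℝ → ℝ)) x)^2
          + (deriv (deriv (deriv (f : ℝ → ℝ))) x)^2))
        - ∫ x : ℝ, deriv (deriv (deriv φ)) x * (deriv (f : ℝ → ℝ) x)^2)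
  ∧ ((∫ x : ℝ, deriv φ x * (u x * f x))
      = (∫ x : ℝ, deriv φ x * ((f x)^2 + (deriv (f : ℝ → ℝ) x)^2))
        - (1/2) * ∫ x : ℝ, deriv (deriv (deriv φ)) x * (f x)^2) := by
  have e1 : deriv (f : ℝ → ℝ) = derivCLM ℝ ℝ f := by ext x; simp
  have e2 : deriv (derivCLM ℝ ℝ f : ℝ → ℝ) = derivCLM ℝ ℝ (derivCLM ℝ ℝ f) := by ext x; simp
  have e3 : deriv (derivCLM ℝ ℝ (derivCLM ℝ ℝ f) : ℝ → ℝ)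
      = derivCLM ℝ ℝ (derivCLM ℝ ℝ (derivCLM ℝ ℝ f)) := by ext x; simp
  have hdu : ∀ x, deriv u x
      = derivCLM ℝ ℝ f x - derivCLM ℝ ℝ (derivCLM ℝ ℝ (derivCLM ℝ ℝ f)) x := by
    intro x
    have hu' : u = fun x => f x - derivCLM ℝ ℝ (derivCLM ℝ ℝ f) x := by
      ext y; rw [hu y, e1, e2]
    rw [hu']
    exact ((hasDerivAt_schwartz f x).sub (hasDerivAt_schwartz _ x)).deriv
  have c1 : ContDiff ℝ (⊤ : ℕ∞) (deriv φ) := (contDiff_infty_iff_deriv.1 hφ).2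
  have c2 : ContDiff ℝ (⊤ : ℕ∞) (deriv (deriv φ)) := (contDiff_infty_iff_deriv.1 c1).2
  have c3 : ContDiff ℝ (⊤ : ℕ∞) (deriv (deriv (deriv φ))) := (contDiff_infty_iff_deriv.1 c2).2
  have bp : ∃ C : ℝ, ∀ x, |deriv φ x| ≤ C := by
    simpa [iteratedDeriv_succ] using hbd 1
  have bq : ∃ C : ℝ, ∀ x, |deriv (deriv φ) x| ≤ C := by
    simpa [iteratedDeriv_succ] using hbd 2
  have br : ∃ C : ℝ, ∀ x, |deriv (deriv (deriv φ)) x| ≤ C := by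
    simpa [iteratedDeriv_succ] using hbd 3
  have hpq : ∀ x, HasDerivAt (deriv φ) (deriv (deriv φ) x) x := fun x =>
    ((contDiff_infty_iff_deriv.1 c1).1 x).hasDerivAt
  have hqr : ∀ x, HasDerivAt (deriv (deriv φ)) (deriv (deriv (deriv φ)) x) x := fun x =>
    ((contDiff_infty_iff_deriv.1 c2).1 x).hasDerivAt
  have I := integrable_weight_mul c1.continuous bp
  have K := integral_cross_term hpq hqr c3.continuous bp bq br
  simp only [hdu, hu, e1, e2, e3]
  have K0 := K f
  have K1 := K (derivCLM ℝ ℝ f)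
  set f1 := derivCLM ℝ ℝ f
  set f2 := derivCLM ℝ ℝ f1
  set f3 := derivCLM ℝ ℝ f2
  -- The first two identities are the same computation for consecutive derivatives of `f`.
  have sq : ∀ a b c : 𝓢(ℝ, ℝ),
      (∫ x, deriv φ x * (a x * c x) = (1/2) * (∫ x, deriv (deriv (deriv φ)) x * (a x * a x))
        - ∫ x, deriv φ x * (b x * b x)) →
      (∫ x, deriv φ x * (a x - c x)^2)
        = (∫ x, deriv φ x * ((a x)^2 + 2*(b x)^2 + (c x)^2))
          - ∫ x, deriv (deriv (deriv φ)) x * (a x)^2 := by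
    intro a b c h
    have l : (∫ x, deriv φ x * (a x - c x)^2) = (∫ x, deriv φ x * (a x * a x))
        - 2 * (∫ x, deriv φ x * (a x * c x)) + ∫ x, deriv φ x * (c x * c x) := by
      have j : Integrable (fun x => deriv φ x * (a x * a x) - 2 * (deriv φ x * (a x * c x))) :=
        (I a a).sub ((I a c).const_mul 2)
      rw [← integral_const_mul, ← integral_sub (I a a) ((I a c).const_mul 2),
        ← integral_add j (I c c)]
      congr 1; ext x; ring
    have m : (∫ x, deriv φ x * ((a x)^2 + 2*(b x)^2 + (c x)^2)) = (∫ x, deriv φ x * (a x * a x))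
        + 2 * (∫ x, deriv φ x * (b x * b x)) + ∫ x, deriv φ x * (c x * c x) := by
      have j : Integrable (fun x => deriv φ x * (a x * a x) + 2 * (deriv φ x * (b x * b x))) :=
        (I a a).add ((I b b).const_mul 2)
      rw [← integral_const_mul, ← integral_add (I a a) ((I b b).const_mul 2),
        ← integral_add j (I c c)]
      congr 1; ext x; ring
    rw [l, m, h]
    simp only [pow_two]
    ring
  refine ⟨sq f f1 f2 K0, sq f1 f2 f3 K1, ?_⟩
  have l : (∫ x, deriv φ x * ((f x - f2 x) * f x)) = (∫ x, deriv φ x * (f x * f x))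
      - ∫ x, deriv φ x * (f x * f2 x) := by
    rw [← integral_sub (I f f) (I f f2)]
    congr 1; ext x; ring
  have m : (∫ x, deriv φ x * ((f x)^2 + (f1 x)^2)) = (∫ x, deriv φ x * (f x * f x))
      + ∫ x, deriv φ x * (f1 x * f1 x) := by
    rw [← integral_add (I f f) (I f1 f1)]
    congr 1; ext x; ring
  rw [l, m, K0]
  simp only [pow_two]
  ring
end

section
/- Let 0 < λ < 1, and let φ : ℝ → ℝ be a smooth, bounded, strictly positive function with |φ''(x)| ≤ λ φ(x) for all x ∈ ℝ. Let f : ℝ → ℝ be a Schwartz function and set u := f − f''. Then for all real numbers a₁, a₂, a₃ > 0, writing ã := min(a₁, a₂, a₃) and Ã := max(a₁, a₂, a₃), one has (ã/2) ∫ φ u² ≤ ∫ φ (a₁ f² + a₂ (f')² + a₃ (f'')²) ≤ (Ã/(1 − λ)) ∫ φ u². -/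
/-! The two quadratic forms are related by the identity
`φ u² = φ (f² + 2 f'² + f''²) - φ'' f² + G'`, where `G = φ' f² - 2 φ f f'`. The boundary term
`G` and its derivative are integrable, so `∫ G' = 0`, and `|φ''| ≤ λ φ` gives
`(1 - λ) ∫ φ (f² + f'² + f''²) ≤ ∫ φ u²`. Integrability of `G` uses that `φ'` is bounded, which
follows from the boundedness of `φ` and `φ''`. The lower bound is the pointwise inequality
`u² ≤ 2 (f² + f''²)`. -/

open MeasureTheory SchwartzMap

/-- A Landau-type bound: a positive function bounded along with its second derivative has a bounded first
derivative, since `φ'` differs from the slope `φ (x + 1) - φ x` by at most `B`. -/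
lemma abs_deriv_le_of_bounded {φ : ℝ → ℝ} {C B : ℝ} (h1 : Differentiable ℝ φ)
    (h2 : Differentiable ℝ (deriv φ)) (h0 : ∀ x, 0 < φ x) (hC : ∀ x, φ x ≤ C)
    (hB : ∀ x, |deriv (deriv φ) x| ≤ B) (x : ℝ) : |deriv φ x| ≤ C + B := by
  obtain ⟨c, hc, hs⟩ := exists_deriv_eq_slope φ (lt_add_one x) h1.continuous.continuousOn
    h1.differentiableOn
  have hm := Convex.norm_image_sub_le_of_norm_deriv_le (f := deriv φ) (s := Set.univ) (C := B)
    (fun y _ => h2 y) (fun y _ => hB y) convex_univ (Set.mem_univ c) (Set.mem_univ x)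
  have hB0 : 0 ≤ B := (abs_nonneg _).trans (hB x)
  have hcx : ‖x - c‖ ≤ 1 := by
    rw [Real.norm_eq_abs, abs_le]; constructor <;> linarith [hc.1, hc.2]
  have hm' : |deriv φ x - deriv φ c| ≤ B := hm.trans (by nlinarith)
  rw [add_sub_cancel_left, div_one] at hs
  rw [abs_le] at hm' ⊢
  constructor <;> linarith [h0 x, h0 (x + 1), hC x, hC (x + 1)]

lemma integrable_bdd_mul_schwartz {ψ : ℝ → ℝ} {C : ℝ} (hψ : Continuous ψ) (hC : ∀ x, |ψ x| ≤ C)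
    (f g : 𝓢(ℝ, ℝ)) : Integrable (fun x => ψ x * (f x * g x)) := by
  obtain ⟨D, hD⟩ : ∃ D, ∀ x, ‖f x‖ ≤ D :=
    ⟨_, fun x => SchwartzMap.norm_le_seminorm ℝ f x⟩
  exact (g.integrable.bdd_mul f.continuous.aestronglyMeasurable (ae_of_all _ hD)).bdd_mul
    hψ.aestronglyMeasurable (ae_of_all _ hC)

/-- Equivalence of weighted L² norms between `u = f - f''` and its canonical variable `f`:
`(ã/2) ∫ φ u² ≤ ∫ φ (a₁ f² + a₂ f'² + a₃ f''²) ≤ (Ã/(1-λ)) ∫ φ u²`. -/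
theorem stmt_8 (lam : ℝ) (hlam0 : 0 < lam) (hlam1 : lam < 1)
    (φ : ℝ → ℝ) (hφs : ContDiff ℝ (⊤ : ℕ∞) φ) (hφbd : ∃ C : ℝ, ∀ x, φ x ≤ C)
    (hφpos : ∀ x, 0 < φ x)
    (hφ'' : ∀ x, |deriv (deriv φ) x| ≤ lam * φ x)
    (f : 𝓢(ℝ, ℝ)) (u : ℝ → ℝ) (hu : ∀ x, u x = f x - deriv (deriv (f : ℝ → ℝ)) x)
    (a₁ a₂ a₃ : ℝ) (ha₁ : 0 < a₁) (ha₂ : 0 < a₂) (ha₃ : 0 < a₃) :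
    (min (min a₁ a₂) a₃ / 2) * (∫ x : ℝ, φ x * (u x)^2)
      ≤ (∫ x : ℝ, φ x * (a₁*(f x)^2 + a₂*(deriv (f : ℝ → ℝ) x)^2
          + a₃*(deriv (deriv (f : ℝ → ℝ)) x)^2))
    ∧ (∫ x : ℝ, φ x * (a₁*(f x)^2 + a₂*(deriv (f : ℝ → ℝ) x)^2
          + a₃*(deriv (deriv (f : ℝ → ℝ)) x)^2))
      ≤ (max (max a₁ a₂) a₃ / (1 - lam)) * ∫ x : ℝ, φ x * (u x)^2 := by
  obtain ⟨C, hC⟩ := hφbd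
  have hφ0 : Differentiable ℝ φ := hφs.differentiable (by simp)
  have hφ1s : ContDiff ℝ (⊤ : ℕ∞) (deriv φ) := (contDiff_infty_iff_deriv.1 hφs).2
  have hφ1 : Differentiable ℝ (deriv φ) := hφ1s.differentiable (by simp)
  have hφ2c : Continuous (deriv (deriv φ)) := (contDiff_infty_iff_deriv.1 hφ1s).2.continuous
  have b0 : ∀ x, |φ x| ≤ C := fun x => by rw [abs_of_pos (hφpos x)]; exact hC x
  have b2 : ∀ x, |deriv (deriv φ) x| ≤ lam * C := fun x =>
    (hφ'' x).trans (mul_le_mul_of_nonneg_left (hC x) hlam0.le)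
  have b1 := abs_deriv_le_of_bounded hφ0 hφ1 hφpos hC b2
  obtain ⟨g, hg⟩ : ∃ g : 𝓢(ℝ, ℝ), deriv (f : ℝ → ℝ) = g :=
    ⟨SchwartzMap.derivCLM ℝ ℝ f, by ext x; simp⟩
  obtain ⟨h, hh⟩ : ∃ h : 𝓢(ℝ, ℝ), deriv (g : ℝ → ℝ) = h :=
    ⟨SchwartzMap.derivCLM ℝ ℝ g, by ext x; simp⟩
  have df : ∀ x, HasDerivAt f (g x) x := fun x => hg ▸ f.differentiableAt.hasDerivAt
  have dg : ∀ x, HasDerivAt g (h x) x := fun x => hh ▸ g.differentiableAt.hasDerivAt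
  simp only [hg, hh] at hu ⊢
  have I := fun p q => integrable_bdd_mul_schwartz hφ0.continuous b0 p q
  have I1 := fun p q => integrable_bdd_mul_schwartz hφ1.continuous b1 p q
  have I2 := fun p q => integrable_bdd_mul_schwartz hφ2c b2 p q
  have iM : Integrable fun x => φ x * (a₁ * f x ^ 2 + a₂ * g x ^ 2 + a₃ * h x ^ 2) := by
    refine ((((I f f).const_mul a₁).add ((I g g).const_mul a₂)).add
      ((I h h).const_mul a₃)).congr (ae_of_all _ fun x => ?_)
    simp only [Pi.add_apply]; ring
  have iu : Integrable fun x => φ x * u x ^ 2 := by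
    refine (((I f f).sub ((I f h).const_mul 2)).add (I h h)).congr (ae_of_all _ fun x => ?_)
    simp only [Pi.add_apply, Pi.sub_apply, hu]; ring
  have iG : Integrable fun x => deriv φ x * (f x * f x) - 2 * (φ x * (f x * g x)) :=
    (I1 f f).sub ((I f g).const_mul 2)
  have iG' : Integrable fun x => deriv (deriv φ) x * (f x * f x) - 2 * (φ x * (g x * g x))
      - 2 * (φ x * (f x * h x)) :=
    ((I2 f f).sub ((I g g).const_mul 2)).sub ((I f h).const_mul 2)
  have dG : ∀ x, HasDerivAt (fun x => deriv φ x * (f x * f x) - 2 * (φ x * (f x * g x)))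
      (deriv (deriv φ) x * (f x * f x) - 2 * (φ x * (g x * g x)) - 2 * (φ x * (f x * h x))) x :=
    fun x => (((hφ1 x).hasDerivAt.mul ((df x).mul (df x))).sub
      (((hφ0 x).hasDerivAt.mul ((df x).mul (dg x))).const_mul 2)).congr_deriv (by
        simp only [Pi.mul_apply]; ring)
  have G0 := integral_eq_zero_of_hasDerivAt_of_integrable dG iG' iG
  constructor
  · rw [← integral_const_mul]
    refine integral_mono (iu.const_mul _) iM fun x => ?_
    set m := min (min a₁ a₂) a₃
    have m1 : m ≤ a₁ := (min_le_left _ _).trans (min_le_left _ _)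
    have m3 : m ≤ a₃ := min_le_right _ _
    have m0 : 0 < m := lt_min (lt_min ha₁ ha₂) ha₃
    have key : m / 2 * u x ^ 2 ≤ a₁ * f x ^ 2 + a₂ * g x ^ 2 + a₃ * h x ^ 2 := by
      rw [hu]
      linarith [mul_nonneg m0.le (sq_nonneg (f x + h x)),
        mul_le_mul_of_nonneg_right m1 (sq_nonneg (f x)),
        mul_le_mul_of_nonneg_right m3 (sq_nonneg (h x)), mul_nonneg ha₂.le (sq_nonneg (g x))]
    calc m / 2 * (φ x * u x ^ 2) = φ x * (m / 2 * u x ^ 2) := by ring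
      _ ≤ _ := mul_le_mul_of_nonneg_left key (hφpos x).le
  · set M := max (max a₁ a₂) a₃
    have m1 : a₁ ≤ M := (le_max_left _ _).trans (le_max_left _ _)
    have m2 : a₂ ≤ M := (le_max_right _ _).trans (le_max_left _ _)
    have m3 : a₃ ≤ M := le_max_right _ _
    have M0 : 0 < M := ha₁.trans_le m1
    have hl : 0 < 1 - lam := sub_pos.2 hlam1
    rw [div_mul_eq_mul_div, le_div_iff₀ hl]
    -- Subtracting `∫ G' = 0` from `∫ φ u²` reduces the bound to a pointwise inequality.
    rw [← sub_zero (∫ x, φ x * u x ^ 2), ← G0, ← integral_sub iu iG', ← integral_const_mul,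
      ← integral_mul_const]
    refine integral_mono (iM.mul_const _) ((iu.sub iG').const_mul _) fun x => ?_
    have p := hφpos x
    have hq := (abs_le.1 (hφ'' x)).2
    have e : φ x * u x ^ 2 - (deriv (deriv φ) x * (f x * f x) - 2 * (φ x * (g x * g x))
        - 2 * (φ x * (f x * h x)))
        = φ x * (f x ^ 2 + 2 * g x ^ 2 + h x ^ 2) - deriv (deriv φ) x * f x ^ 2 := by
      rw [hu]; ring
    have s1 : φ x * (a₁ * f x ^ 2 + a₂ * g x ^ 2 + a₃ * h x ^ 2)
        ≤ φ x * (M * (f x ^ 2 + g x ^ 2 + h x ^ 2)) := by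
      rw [mul_add M, mul_add M]; gcongr
    have s2 : (1 - lam) * (φ x * (f x ^ 2 + g x ^ 2 + h x ^ 2))
        ≤ φ x * (f x ^ 2 + 2 * g x ^ 2 + h x ^ 2) - deriv (deriv φ) x * f x ^ 2 := by
      have := mul_le_mul_of_nonneg_right hq (sq_nonneg (f x))
      have k1 := mul_nonneg p.le (sq_nonneg (g x))
      have k2 := mul_nonneg hlam0.le k1
      have k3 := mul_nonneg hlam0.le (mul_nonneg p.le (sq_nonneg (h x)))
      linarith
    calc φ x * (a₁ * f x ^ 2 + a₂ * g x ^ 2 + a₃ * h x ^ 2) * (1 - lam)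
        ≤ φ x * (M * (f x ^ 2 + g x ^ 2 + h x ^ 2)) * (1 - lam) := by gcongr
      _ = M * ((1 - lam) * (φ x * (f x ^ 2 + g x ^ 2 + h x ^ 2))) := by ring
      _ ≤ M * (φ x * (f x ^ 2 + 2 * g x ^ 2 + h x ^ 2) - deriv (deriv φ) x * f x ^ 2) := by gcongr
      _ = _ := by rw [← e]
end

section
/- Let u : ℝ → ℝ be a Schwartz function and define f(x) := (1/2) ∫_ℝ e^{−|x − y|} u(y) dy. Then f is infinitely differentiable and satisfies f(x) − f''(x) = u(x) for every x ∈ ℝ. -/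
open MeasureTheory SchwartzMap

/-!
Splitting the integral at `y = x` gives `f = (e^{-x} A + e^x B) / 2` with
`A x = ∫_{y ≤ x} e^y u y` and `B x = ∫_{y > x} e^{-y} u y`. By the fundamental theorem of calculus
`A' = e^x u` and `B' = -e^{-x} u`, so `A`, `B` and hence `f` are smooth. In `f'` the two boundary
terms cancel, so `f' = (-e^{-x} A + e^x B) / 2`, while in `f''` they add up to `-u`: `f'' = f - u`.
-/

/-- A one-sided exponential weight is bounded on the half-line `y ≤ x`, so integrability of `u`
suffices. -/
lemma integrableOn_exp_mul_schwartz_Iic (u : 𝓢(ℝ, ℝ)) (x : ℝ) :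
    IntegrableOn (fun y => Real.exp y * u y) (Set.Iic x) := by
  refine Integrable.bdd_mul (c := Real.exp x) u.integrable.integrableOn
    Real.continuous_exp.aestronglyMeasurable ?_
  filter_upwards [ae_restrict_mem measurableSet_Iic] with y hy
  rw [Real.norm_eq_abs, Real.abs_exp]
  exact Real.exp_le_exp.2 hy

lemma integrableOn_exp_neg_mul_schwartz_Ioi (u : 𝓢(ℝ, ℝ)) (x : ℝ) :
    IntegrableOn (fun y => Real.exp (-y) * u y) (Set.Ioi x) := by
  refine Integrable.bdd_mul (c := Real.exp (-x)) u.integrable.integrableOn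
    (by fun_prop : Continuous fun y : ℝ => Real.exp (-y)).aestronglyMeasurable ?_
  filter_upwards [ae_restrict_mem measurableSet_Ioi] with y hy
  rw [Real.norm_eq_abs, Real.abs_exp]
  exact Real.exp_le_exp.2 (neg_le_neg (le_of_lt hy))

lemma hasDerivAt_integral_Iic {g : ℝ → ℝ} (hg : Continuous g)
    (hi : ∀ x, IntegrableOn g (Set.Iic x)) (x : ℝ) :
    HasDerivAt (fun x => ∫ y in Set.Iic x, g y) (g x) x := by
  have h : (fun x => ∫ y in Set.Iic x, g y) =
      fun x => (∫ y in (0 : ℝ)..x, g y) + ∫ y in Set.Iic 0, g y := by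
    funext x
    rw [← intervalIntegral.integral_Iic_sub_Iic (hi 0) (hi x)]
    ring
  rw [h]
  exact (hg.integral_hasStrictDerivAt 0 x).hasDerivAt.add_const _

lemma hasDerivAt_integral_Ioi {g : ℝ → ℝ} (hg : Continuous g)
    (hi : ∀ x, IntegrableOn g (Set.Ioi x)) (x : ℝ) :
    HasDerivAt (fun x => ∫ y in Set.Ioi x, g y) (-g x) x := by
  have h : (fun x => ∫ y in Set.Ioi x, g y) =
      fun x => (∫ y in Set.Ioi 0, g y) - ∫ y in (0 : ℝ)..x, g y := by
    funext x
    rw [← intervalIntegral.integral_Ioi_sub_Ioi' (hi 0) (hi x)]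
    ring
  rw [h]
  exact (hg.integral_hasStrictDerivAt 0 x).hasDerivAt.const_sub _

lemma contDiff_infty_of_hasDerivAt {F g : ℝ → ℝ} (hF : ∀ x, HasDerivAt F (g x) x)
    (hg : ContDiff ℝ (⊤ : ℕ∞) g) : ContDiff ℝ (⊤ : ℕ∞) F := by
  rw [contDiff_infty_iff_deriv]
  refine ⟨fun x => (hF x).differentiableAt, ?_⟩
  rwa [show deriv F = g from funext fun x => (hF x).deriv]

lemma integral_exp_neg_abs_mul (u : 𝓢(ℝ, ℝ)) (x : ℝ) :
    ∫ y : ℝ, Real.exp (-|x - y|) * u y =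
      Real.exp (-x) * (∫ y in Set.Iic x, Real.exp y * u y) +
        Real.exp x * ∫ y in Set.Ioi x, Real.exp (-y) * u y := by
  have hint : Integrable fun y => Real.exp (-|x - y|) * u y := by
    refine Integrable.bdd_mul (c := 1) u.integrable
      (by fun_prop : Continuous fun y : ℝ => Real.exp (-|x - y|)).aestronglyMeasurable ?_
    filter_upwards with y
    rw [Real.norm_eq_abs, Real.abs_exp, Real.exp_le_one_iff]
    exact neg_nonpos.2 (abs_nonneg _)
  rw [← intervalIntegral.integral_Iic_add_Ioi (b := x) hint.integrableOn hint.integrableOn,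
    ← integral_const_mul, ← integral_const_mul]
  congr 1
  · refine setIntegral_congr_fun measurableSet_Iic fun y hy => ?_
    have hy' : y ≤ x := hy
    rw [abs_of_nonneg (sub_nonneg.2 hy'), ← mul_assoc, ← Real.exp_add]
    ring_nf
  · refine setIntegral_congr_fun measurableSet_Ioi fun y hy => ?_
    have hy' : x < y := hy
    rw [abs_of_neg (sub_neg.2 hy'), ← mul_assoc, ← Real.exp_add]
    ring_nf

/-- The convolution `f = (1/2) e^{-|·|} ⋆ u` of a Schwartz function `u` is smooth and
solves `(1 - ∂²) f = u`. -/
theorem stmt_10 (u : 𝓢(ℝ, ℝ)) (f : ℝ → ℝ)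
    (hf : ∀ x, f x = (1/2) * ∫ y : ℝ, Real.exp (-|x - y|) * u y) :
    ContDiff ℝ (⊤ : ℕ∞) f ∧ ∀ x, f x - deriv (deriv f) x = u x := by
  have hu : ContDiff ℝ (⊤ : ℕ∞) u := u.smooth _
  have hg₁ : ContDiff ℝ (⊤ : ℕ∞) fun y => Real.exp y * u y := Real.contDiff_exp.mul hu
  have hg₂ : ContDiff ℝ (⊤ : ℕ∞) fun y => Real.exp (-y) * u y :=
    (Real.contDiff_exp.comp contDiff_neg).mul hu
  have hA := hasDerivAt_integral_Iic hg₁.continuous (integrableOn_exp_mul_schwartz_Iic u)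
  have hB := hasDerivAt_integral_Ioi hg₂.continuous (integrableOn_exp_neg_mul_schwartz_Ioi u)
  have hAs := contDiff_infty_of_hasDerivAt hA hg₁
  have hBs := contDiff_infty_of_hasDerivAt hB hg₂.neg
  have hfe : f = fun x => (1/2) * (Real.exp (-x) * (∫ y in Set.Iic x, Real.exp y * u y) +
        Real.exp x * ∫ y in Set.Ioi x, Real.exp (-y) * u y) := by
    funext x
    rw [hf, integral_exp_neg_abs_mul]
  clear hf
  set A : ℝ → ℝ := fun x => ∫ y in Set.Iic x, Real.exp y * u y
  set B : ℝ → ℝ := fun x => ∫ y in Set.Ioi x, Real.exp (-y) * u y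
  have hfe' : f = fun x => (1/2) * (Real.exp (-x) * A x + Real.exp x * B x) := hfe
  have hen : ∀ x : ℝ, HasDerivAt (fun x => Real.exp (-x)) (-Real.exp (-x)) x := fun x => by
    simpa using (hasDerivAt_neg x).exp
  have hee : ∀ x : ℝ, Real.exp (-x) * Real.exp x = 1 := fun x => by
    rw [← Real.exp_add, neg_add_cancel, Real.exp_zero]
  have hd : deriv f = fun x => (1/2) * (-(Real.exp (-x) * A x) + Real.exp x * B x) := by
    funext x
    rw [hfe', ((((hen x).fun_mul (hA x)).fun_add ((Real.hasDerivAt_exp x).fun_mul (hB x))).const_mul _).deriv]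
    ring
  refine ⟨?_, fun x => ?_⟩
  · rw [hfe']
    exact contDiff_const.mul (((Real.contDiff_exp.comp contDiff_neg).mul hAs).add
      (Real.contDiff_exp.mul hBs))
  · rw [hd, ((((hen x).fun_mul (hA x)).fun_neg.fun_add
      ((Real.hasDerivAt_exp x).fun_mul (hB x))).const_mul _).deriv, hfe']
    linear_combination (u x) * hee x
end

section
/- Let f, g : ℝ → ℝ be Schwartz functions such that f(x) − f''(x) ≤ g(x) − g''(x) for every x ∈ ℝ. Then f(x) ≤ g(x) for every x ∈ ℝ. -/
open MeasureTheory SchwartzMap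

/-!
Maximum principle. The difference `u = f - g` satisfies `u ≤ u''`. If `u` were positive somewhere,
then, vanishing at infinity, it would attain a positive global maximum at some `m`. There `u' = 0`
and `u'' ≥ u > 0`, so by the second-derivative test `m` is also a local minimum. Hence `u` is
constant near `m` and `u''(m) = 0`, a contradiction.
-/

/-- Comparison principle for `(1 - ∂²)⁻¹`: if `f - f'' ≤ g - g''` pointwise for Schwartz
functions `f, g`, then `f ≤ g` pointwise. -/
theorem stmt_11 (f g : 𝓢(ℝ, ℝ))
    (h : ∀ x, f x - deriv (deriv (f : ℝ → ℝ)) x ≤ g x - deriv (deriv (g : ℝ → ℝ)) x) :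
    ∀ x, f x ≤ g x := by
  intro x₀
  by_contra! hlt
  set u : 𝓢(ℝ, ℝ) := f - g with hu
  have hux : ∀ x, u x = f x - g x := fun x => rfl
  have hd1 : deriv (u : ℝ → ℝ) = fun x => deriv (f : ℝ → ℝ) x - deriv (g : ℝ → ℝ) x := by
    funext x
    exact deriv_fun_sub f.differentiableAt g.differentiableAt
  have hdd : ∀ k : 𝓢(ℝ, ℝ), Differentiable ℝ (deriv (k : ℝ → ℝ)) := fun k =>
    ((contDiff_succ_iff_deriv (n := 1)).1 (k.smooth 2)).2.2.differentiable one_ne_zero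
  have hd2 : ∀ x, deriv (deriv (u : ℝ → ℝ)) x
      = deriv (deriv (f : ℝ → ℝ)) x - deriv (deriv (g : ℝ → ℝ)) x := by
    intro x
    rw [hd1]
    exact deriv_fun_sub (hdd f x) (hdd g x)
  have hpos : 0 < u x₀ := by rw [hux]; linarith
  obtain ⟨m, hm⟩ := u.continuous.exists_forall_ge' x₀
    ((u.tendsto_cocompact.eventually (gt_mem_nhds hpos)).mono fun x hx => hx.le)
  have hmax : IsLocalMax (u : ℝ → ℝ) m := Filter.Eventually.of_forall hm
  have h2 : 0 < deriv (deriv (u : ℝ → ℝ)) m := by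
    have := h m
    have := hm x₀
    have := hux m
    rw [hd2]; linarith
  have hmin : IsLocalMin (u : ℝ → ℝ) m :=
    isLocalMin_of_deriv_deriv_pos h2 hmax.deriv_eq_zero u.continuous.continuousAt
  have hconst : (u : ℝ → ℝ) =ᶠ[nhds m] fun _ => u m := by
    filter_upwards [hmin, hmax] with x h₁ h₂ using le_antisymm h₂ h₁
  have h0 := hconst.deriv.deriv_eq
  simp only [deriv_const', deriv_const] at h0
  exact h2.ne' h0
end

section
/- Let φ : ℝ → ℝ be a bounded, strictly positive continuous function, and let K > 0 satisfy (1/2) ∫_ℝ e^{−|x − y|} φ(y) dy ≤ K φ(x) for every x ∈ ℝ. Let ψ : ℝ → ℝ be a measurable function with |ψ(x)| ≤ φ(x) for all x. Then for all Schwartz functions v, w, h on ℝ, setting G(x) := (1/2) ∫_ℝ e^{−|x − y|} w(y) h(y) dy, one has |∫ ψ v G| ≤ K · (∫ (v² + (v')²))^{1/2} · ∫ φ (w² + h²). -/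
open MeasureTheory SchwartzMap

/-!
By the one-dimensional Sobolev inequality `|v| ≤ ‖v‖_{H¹}` pointwise, the left-hand side is at most
`‖v‖_{H¹} ∫ φ(x) (1/2) ∫ e^{-|x - y|} |w y h y| dy dx`. Since the kernel is symmetric, Fubini moves
it onto `φ`, where the hypothesis `(1 - ∂²)⁻¹ φ ≤ K φ` applies, leaving `K ∫ φ |w h|`; finally
`|w h| ≤ w² + h²`. Absolute convergence of the double integral follows from the boundedness of `φ`
and the integrability of `e^{-|x|}` and `w h`.
-/

lemma integrable_exp_neg_abs_aux : Integrable (fun x : ℝ => Real.exp (-|x|)) := by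
  -- A nonzero Bochner integral forces integrability.
  refine Integrable.of_integral_ne_zero ?_
  rw [integral_comp_abs (f := fun x => Real.exp (-x)), integral_exp_neg_Ioi_zero]
  norm_num

lemma integrable_mul_schwartz (f g : 𝓢(ℝ, ℝ)) : Integrable (fun x => f x * g x) :=
  (f.memLp 2).integrable_mul (g.memLp 2)

/-- The Sobolev inequality `‖v‖_∞ ≤ ‖v‖_{H¹}`, from `v(x)² = ∫_{-∞}^x 2 v v'`. -/
lemma abs_le_sobolev (v : 𝓢(ℝ, ℝ)) (x : ℝ) :
    |v x| ≤ Real.sqrt (∫ x : ℝ, ((v x)^2 + (deriv (v : ℝ → ℝ) x)^2)) := by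
  set d : 𝓢(ℝ, ℝ) := derivCLM ℝ ℝ v with hd
  have hdv : ∀ y, deriv (v : ℝ → ℝ) y = d y := fun y => (derivCLM_apply ℝ v y).symm
  simp_rw [hdv]
  have hint : Integrable (fun y => (v y)^2 + (d y)^2) := by
    simp only [sq]
    exact (integrable_mul_schwartz v v).add (integrable_mul_schwartz d d)
  have hint2 : Integrable (fun y => 2 * (v y * d y)) := (integrable_mul_schwartz v d).const_mul 2
  have hder : ∀ y ∈ Set.Iic x, HasDerivAt (fun z => (v z)^2) (2 * (v y * d y)) y := by
    intro y _
    have := (v.differentiableAt (x := y)).hasDerivAt.pow 2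
    rw [hdv] at this
    convert! this using 1
    simp
    ring
  have hlim : Filter.Tendsto (fun z => (v z)^2) Filter.atBot (nhds 0) := by
    have := ((zero_at_infty v).mono_left atBot_le_cocompact).pow 2
    simpa using this
  have hftc := integral_Iic_of_hasDerivAt_of_tendsto' hder hint2.integrableOn hlim
  apply Real.abs_le_sqrt
  calc (v x)^2 = ∫ y in Set.Iic x, 2 * (v y * d y) := by rw [hftc]; ring
    _ ≤ ∫ y in Set.Iic x, ((v y)^2 + (d y)^2) := by
        refine integral_mono hint2.integrableOn hint.integrableOn fun y => ?_
        change 2 * (v y * d y) ≤ (v y)^2 + (d y)^2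
        nlinarith [sq_nonneg (v y - d y)]
    _ ≤ ∫ y, ((v y)^2 + (d y)^2) :=
        setIntegral_le_integral hint (Filter.Eventually.of_forall fun y => by positivity)

/-- Nonlocal-term estimate: with `G = (1 - ∂²)⁻¹(wh)` given by convolution with
`(1/2)e^{-|x|}`, and `|ψ| ≤ φ` with `(1 - ∂²)⁻¹ φ ≤ K φ`, one has
`|∫ ψ v G| ≤ K ‖v‖_{H¹} ∫ φ (w² + h²)`. -/
theorem stmt_12 (φ : ℝ → ℝ) (hφc : Continuous φ) (hφpos : ∀ x, 0 < φ x)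
    (hφbd : ∃ C : ℝ, ∀ x, φ x ≤ C) (K : ℝ) (hK : 0 < K)
    (hker : ∀ x : ℝ, (1/2) * (∫ y : ℝ, Real.exp (-|x - y|) * φ y) ≤ K * φ x)
    (ψ : ℝ → ℝ) (hψ : Measurable ψ) (hψφ : ∀ x, |ψ x| ≤ φ x)
    (v w h : 𝓢(ℝ, ℝ)) :
    |∫ x : ℝ, ψ x * v x * ((1/2) * ∫ y : ℝ, Real.exp (-|x - y|) * (w y * h y))|
      ≤ K * Real.sqrt (∫ x : ℝ, ((v x)^2 + (deriv (v : ℝ → ℝ) x)^2))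
          * ∫ x : ℝ, φ x * ((w x)^2 + (h x)^2) := by
  obtain ⟨C, hC⟩ := hφbd
  set A := Real.sqrt (∫ x : ℝ, ((v x)^2 + (deriv (v : ℝ → ℝ) x)^2)) with hA
  have hA0 : 0 ≤ A := Real.sqrt_nonneg _
  have hφb : ∀ᵐ x : ℝ, ‖φ x‖ ≤ C := .of_forall fun x => by
    rw [Real.norm_eq_abs, abs_of_pos (hφpos x)]; exact hC x
  have hp : Integrable (fun y => |w y * h y|) := (integrable_mul_schwartz w h).abs
  have hφp : Integrable (fun y => φ y * |w y * h y|) :=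
    hp.bdd_mul hφc.aestronglyMeasurable hφb
  have hsq : Integrable (fun y => φ y * ((w y)^2 + (h y)^2)) := by
    refine Integrable.bdd_mul ?_ hφc.aestronglyMeasurable hφb
    simp only [sq]
    exact (integrable_mul_schwartz w w).add (integrable_mul_schwartz h h)
  have hF : Integrable (Function.uncurry fun x y : ℝ =>
      φ x * (Real.exp (-|x - y|) * |w y * h y|)) (volume.prod volume) := by
    have h1 := hp.convolution_integrand (ContinuousLinearMap.mul ℝ ℝ) integrable_exp_neg_abs_aux
    refine (Integrable.bdd_mul (f := fun q : ℝ × ℝ => φ q.1) (c := C) h1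
      (hφc.comp continuous_fst).aestronglyMeasurable (.of_forall fun q => ?_)).congr
      (.of_forall fun q => ?_)
    · rw [Real.norm_eq_abs, abs_of_pos (hφpos _)]; exact hC _
    · simp only [Function.uncurry, ContinuousLinearMap.mul_apply']
      ring
  have hbound : Integrable (fun x : ℝ =>
      A * (1/2) * ∫ y : ℝ, φ x * (Real.exp (-|x - y|) * |w y * h y|)) :=
    hF.integral_prod_left.const_mul _
  have hpt : ∀ x : ℝ,
      ‖ψ x * v x * ((1/2) * ∫ y : ℝ, Real.exp (-|x - y|) * (w y * h y))‖
        ≤ A * (1/2) * ∫ y : ℝ, φ x * (Real.exp (-|x - y|) * |w y * h y|) := by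
    intro x
    have hG : |∫ y : ℝ, Real.exp (-|x - y|) * (w y * h y)|
        ≤ ∫ y : ℝ, Real.exp (-|x - y|) * |w y * h y| := by
      refine (abs_integral_le_integral_abs).trans_eq (integral_congr_ae (.of_forall fun y => ?_))
      simp only [abs_mul, Real.abs_exp]
    rw [integral_const_mul, Real.norm_eq_abs, abs_mul, abs_mul, abs_mul,
      abs_of_pos (by norm_num : (0:ℝ) < 1/2)]
    calc |ψ x| * |v x| * (1/2 * |∫ y : ℝ, Real.exp (-|x - y|) * (w y * h y)|)
        ≤ φ x * A * (1/2 * ∫ y : ℝ, Real.exp (-|x - y|) * |w y * h y|) := by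
          gcongr
          · exact mul_nonneg (hφpos x).le hA0
          · exact (hφpos x).le
          · exact hψφ x
          · exact abs_le_sobolev v x
      _ = _ := by ring
  have hker' : ∀ y : ℝ, (∫ x : ℝ, φ x * (Real.exp (-|x - y|) * |w y * h y|))
      ≤ 2 * K * (φ y * |w y * h y|) := by
    intro y
    have h1 : (∫ x : ℝ, φ x * (Real.exp (-|x - y|) * |w y * h y|))
        = (∫ x : ℝ, Real.exp (-|y - x|) * φ x) * |w y * h y| := by
      rw [← integral_mul_const]
      refine integral_congr_ae (.of_forall fun x => ?_)
      simp only [abs_sub_comm x y]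
      ring
    rw [h1]
    nlinarith [mul_le_mul_of_nonneg_right (hker y) (abs_nonneg (w y * h y))]
  have hle : (∫ y, φ y * |w y * h y|) ≤ ∫ y, φ y * ((w y)^2 + (h y)^2) := by
    refine integral_mono hφp hsq fun y => mul_le_mul_of_nonneg_left ?_ (hφpos y).le
    rw [abs_mul]
    nlinarith [sq_nonneg (|w y| - |h y|), sq_abs (w y), sq_abs (h y), sq_nonneg (w y),
      sq_nonneg (h y)]
  calc _ ≤ ∫ x : ℝ, A * (1/2) * ∫ y : ℝ, φ x * (Real.exp (-|x - y|) * |w y * h y|) :=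
        norm_integral_le_of_norm_le hbound (.of_forall hpt)
    _ = A * (1/2) * ∫ y : ℝ, ∫ x : ℝ, φ x * (Real.exp (-|x - y|) * |w y * h y|) := by
        rw [integral_const_mul, integral_integral_swap hF]
    _ ≤ A * (1/2) * ∫ y : ℝ, 2 * K * (φ y * |w y * h y|) := by
        refine mul_le_mul_of_nonneg_left ?_ (by positivity)
        exact integral_mono hF.integral_prod_right (hφp.const_mul _) hker'
    _ = K * A * ∫ y : ℝ, φ y * |w y * h y| := by rw [integral_const_mul]; ring
    _ ≤ _ := mul_le_mul_of_nonneg_left hle (by positivity)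
end

section
/- Let φ : ℝ → ℝ be a bounded, strictly positive, continuously differentiable function with |φ'(x)| ≤ φ(x) for all x, and let K > 0 satisfy (1/2) ∫_ℝ e^{−|x − y|} φ(y) dy ≤ K φ(x) for every x ∈ ℝ. Then for all Schwartz functions v, w, h on ℝ, setting G(x) := (1/2) ∫_ℝ e^{−|x − y|} w(y) h(y) dy, one has |∫ (φ v')' G| ≤ 2(1 + K) · (∫ (v² + (v')²))^{1/2} · ∫ φ (w² + (w')² + h² + (h')²). -/
open MeasureTheory SchwartzMap

/-!
Write `f = w h` and `g = φ v'`. By Fubini the left-hand integral is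
`(1/2) ∫ f(y) (∫ e^{-|x-y|} g'(x) dx) dy`, and integrating by parts on either side of `y` bounds the
inner integral by `∫ e^{-|x-y|} φ(x) |v'(x)| dx` (`abs_integral_kernel_deriv_le`). The condition
`|φ'| ≤ φ` gives the Harnack bound `e^{-|x-y|} φ(x) ≤ φ(y)` (`harnack`), so
`∫ (e^{-|x-y|} φ(x))² dx ≤ φ(y) ∫ e^{-|x-y|} φ(x) dx ≤ 2 K φ(y)²`. Cauchy–Schwarz then bounds the
inner integral by `√(2K) φ(y) ‖v'‖_{L²}`, and `|w h| ≤ (w² + h²)/2` finishes the proof.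
-/

lemma integrable_kernel (y : ℝ) : Integrable (fun x : ℝ => Real.exp (-|x - y|)) := by
  have h0 : Integrable (fun x : ℝ => Real.exp (-|x|)) := by
    rw [← integrableOn_univ, ← Set.Iic_union_Ioi (a := (0 : ℝ))]
    refine IntegrableOn.union ?_ ?_
    · refine (integrableOn_exp_Iic 0).congr_fun (fun x hx => ?_) measurableSet_Iic
      simp only [abs_of_nonpos (show x ≤ 0 from hx), neg_neg]
    · refine (integrableOn_exp_neg_Ioi 0).congr_fun (fun x hx => ?_) measurableSet_Ioi
      simp only [abs_of_pos (show 0 < x from hx)]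
  exact h0.comp_sub_right y

/-- The condition `|φ'| ≤ φ` makes `e^x φ` monotone and `e^{-x} φ` antitone, whence `φ` varies
by a factor of at most `e^{|x-y|}` between `x` and `y`. -/
lemma harnack {φ : ℝ → ℝ} (hφ : Differentiable ℝ φ) (hφ' : ∀ x, |deriv φ x| ≤ φ x) (x y : ℝ) :
    Real.exp (-|x - y|) * φ x ≤ φ y := by
  rcases le_total x y with hxy | hxy
  · have hmono : Monotone (fun t => Real.exp t * φ t) := by
      refine monotone_of_deriv_nonneg (Real.differentiable_exp.mul hφ) fun t => ?_
      have hd : HasDerivAt (fun t => Real.exp t * φ t)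
          (Real.exp t * φ t + Real.exp t * deriv φ t) t :=
        (Real.hasDerivAt_exp t).mul (hφ t).hasDerivAt
      rw [hd.deriv, ← mul_add]
      exact mul_nonneg (Real.exp_pos t).le (by linarith [neg_abs_le (deriv φ t), hφ' t])
    have h1 : Real.exp x * φ x ≤ Real.exp y * φ y := hmono hxy
    rw [abs_of_nonpos (by linarith), neg_neg, Real.exp_sub, div_mul_eq_mul_div,
      div_le_iff₀ (Real.exp_pos y)]
    linarith
  · have hanti : Antitone (fun t => Real.exp (-t) * φ t) := by
      refine antitone_of_deriv_nonpos
        ((Real.differentiable_exp.comp differentiable_neg).mul hφ) fun t => ?_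
      have hd : HasDerivAt (fun t => Real.exp (-t) * φ t)
          (Real.exp (-t) * (-1) * φ t + Real.exp (-t) * deriv φ t) t :=
        ((hasDerivAt_neg t).exp).mul (hφ t).hasDerivAt
      rw [hd.deriv]
      have := mul_nonneg (Real.exp_pos (-t)).le
        (show 0 ≤ φ t - deriv φ t by linarith [le_abs_self (deriv φ t), hφ' t])
      linarith
    have h1 : Real.exp (-x) * φ x ≤ Real.exp (-y) * φ y := hanti hxy
    rw [abs_of_nonneg (by linarith), show -(x - y) = -x - -y by ring, Real.exp_sub,
      div_mul_eq_mul_div, div_le_iff₀ (Real.exp_pos _)]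
    linarith

lemma integrable_kernel_mul {g : ℝ → ℝ} (hg : Integrable g) (y : ℝ) :
    Integrable (fun x : ℝ => Real.exp (-|x - y|) * g x) := by
  refine hg.bdd_mul (c := 1) (by fun_prop) (Filter.Eventually.of_forall fun x => ?_)
  rw [Real.norm_of_nonneg (Real.exp_pos _).le]
  exact Real.exp_le_one_iff.2 (by simp)

/-- Integration by parts against the kernel, whose weak derivative is bounded by the kernel itself;
the boundary terms at `y` from the two half-lines cancel. -/
lemma abs_integral_kernel_deriv_le {g g' : ℝ → ℝ} (hd : ∀ x, HasDerivAt g (g' x) x)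
    (hg : Integrable g) (hg' : Integrable g') (y : ℝ) :
    |∫ x : ℝ, Real.exp (-|x - y|) * g' x| ≤ ∫ x : ℝ, Real.exp (-|x - y|) * |g x| := by
  have i0 := integrable_kernel_mul hg y
  have i1 := integrable_kernel_mul hg' y
  have eL : ∀ x ∈ Set.Iic y, Real.exp (-|x - y|) = Real.exp (x - y) := fun x hx => by
    rw [abs_of_nonpos (sub_nonpos.2 hx), neg_neg]
  have eR : ∀ x ∈ Set.Ioi y, Real.exp (-|x - y|) = Real.exp (y - x) := fun x hx => by
    rw [abs_of_pos (sub_pos.2 hx), neg_sub]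
  have hL : (∫ x in Set.Iic y, (Real.exp (-|x - y|) * g x + Real.exp (-|x - y|) * g' x)) = g y := by
    have dL : ∀ x ∈ Set.Iic y, HasDerivAt (fun x => Real.exp (x - y) * g x)
        (Real.exp (x - y) * g x + Real.exp (x - y) * g' x) x := fun x _ => by
      refine ((((hasDerivAt_id x).sub_const y).exp).mul (hd x)).congr_deriv ?_
      simp
    have iA : IntegrableOn (fun x => Real.exp (x - y) * g x) (Set.Iic y) :=
      i0.integrableOn.congr_fun (fun x hx => by simp only [eL x hx]) measurableSet_Iic
    have iB : IntegrableOn (fun x => Real.exp (x - y) * g x + Real.exp (x - y) * g' x)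
        (Set.Iic y) :=
      (i0.add i1).integrableOn.congr_fun
        (fun x hx => by simp only [Pi.add_apply, eL x hx]) measurableSet_Iic
    rw [setIntegral_congr_fun measurableSet_Iic
      (g := fun x => Real.exp (x - y) * g x + Real.exp (x - y) * g' x)
      (fun x hx => by simp only [eL x hx]),
      integral_Iic_of_hasDerivAt_of_tendsto' dL iB
        (tendsto_zero_of_hasDerivAt_of_integrableOn_Iic dL iB iA)]
    simp
  have hR : (∫ x in Set.Ioi y, (-(Real.exp (-|x - y|) * g x) + Real.exp (-|x - y|) * g' x))
      = - g y := by
    have dR : ∀ x, HasDerivAt (fun x => Real.exp (y - x) * g x)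
        (-(Real.exp (y - x) * g x) + Real.exp (y - x) * g' x) x := fun x => by
      refine ((((hasDerivAt_id x).const_sub y).exp).mul (hd x)).congr_deriv ?_
      simp
    have iA : IntegrableOn (fun x => Real.exp (y - x) * g x) (Set.Ioi y) :=
      i0.integrableOn.congr_fun (fun x hx => by simp only [eR x hx]) measurableSet_Ioi
    have iB : IntegrableOn (fun x => -(Real.exp (y - x) * g x) + Real.exp (y - x) * g' x)
        (Set.Ioi y) :=
      (i0.neg.add i1).integrableOn.congr_fun
        (fun x hx => by simp only [Pi.add_apply, Pi.neg_apply, eR x hx]) measurableSet_Ioi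
    rw [setIntegral_congr_fun measurableSet_Ioi
      (g := fun x => -(Real.exp (y - x) * g x) + Real.exp (y - x) * g' x)
      (fun x hx => by simp only [eR x hx]),
      integral_Ioi_of_hasDerivAt_of_tendsto' (fun x _ => dR x) iB
        (tendsto_zero_of_hasDerivAt_of_integrableOn_Ioi (fun x _ => dR x) iB iA)]
    simp
  rw [integral_add i0.integrableOn i1.integrableOn] at hL
  rw [integral_add (f := fun x => -(Real.exp (-|x - y|) * g x)) i0.neg.integrableOn
    i1.integrableOn, integral_neg] at hR
  have s1 := intervalIntegral.integral_Iic_add_Ioi (b := y) i1.integrableOn i1.integrableOn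
  have s2 := intervalIntegral.integral_Iic_add_Ioi (b := y) i0.abs.integrableOn i0.abs.integrableOn
  have aL := abs_integral_le_integral_abs (μ := volume.restrict (Set.Iic y))
    (f := fun x => Real.exp (-|x - y|) * g x)
  have aR := abs_integral_le_integral_abs (μ := volume.restrict (Set.Ioi y))
    (f := fun x => Real.exp (-|x - y|) * g x)
  have e : (∫ x : ℝ, Real.exp (-|x - y|) * |g x|) = ∫ x : ℝ, |Real.exp (-|x - y|) * g x| :=
    integral_congr_ae (Filter.Eventually.of_forall fun x => by
      simp only [abs_mul, abs_of_pos (Real.exp_pos _)])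
  rw [e, ← s1, ← s2, abs_le]
  rw [abs_le] at aL aR
  constructor <;> linarith [aL.1, aL.2, aR.1, aR.2]

/-- Cauchy–Schwarz in `L²(ℝ)` for nonnegative functions. -/
lemma integral_mul_le_sqrt {a b : ℝ → ℝ} (ha0 : ∀ x, 0 ≤ a x) (hb0 : ∀ x, 0 ≤ b x)
    (ha : MemLp a 2) (hb : MemLp b 2) :
    (∫ x, a x * b x) ≤ Real.sqrt (∫ x, a x ^ 2) * Real.sqrt (∫ x, b x ^ 2) := by
  have := integral_mul_le_Lp_mul_Lq_of_nonneg (μ := volume) Real.HolderConjugate.two_two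
    (Filter.Eventually.of_forall ha0) (Filter.Eventually.of_forall hb0)
    (by simpa using ha) (by simpa using hb)
  simpa [Real.sqrt_eq_rpow] using this

theorem stmt_13 (φ : ℝ → ℝ) (hφc : ContDiff ℝ 1 φ) (hφpos : ∀ x, 0 < φ x)
    (hφbd : ∃ C : ℝ, ∀ x, φ x ≤ C) (hφ' : ∀ x, |deriv φ x| ≤ φ x)
    (K : ℝ) (hK : 0 < K)
    (hker : ∀ x : ℝ, (1/2) * (∫ y : ℝ, Real.exp (-|x - y|) * φ y) ≤ K * φ x)
    (v w h : 𝓢(ℝ, ℝ)) :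
    |∫ x : ℝ, deriv (fun z => φ z * deriv (v : ℝ → ℝ) z) x
        * ((1/2) * ∫ y : ℝ, Real.exp (-|x - y|) * (w y * h y))|
      ≤ 2*(1 + K) * Real.sqrt (∫ x : ℝ, ((v x)^2 + (deriv (v : ℝ → ℝ) x)^2))
          * ∫ x : ℝ, φ x * ((w x)^2 + (deriv (w : ℝ → ℝ) x)^2
              + (h x)^2 + (deriv (h : ℝ → ℝ) x)^2) := by
  obtain ⟨C, hC⟩ := hφbd
  have hφd : Differentiable ℝ φ := hφc.differentiable (by norm_num)
  have hφcont : Continuous φ := hφc.continuous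
  have hφ'cont : Continuous (deriv φ) := hφc.continuous_deriv (by norm_num)
  have nφ : ∀ x, ‖φ x‖ ≤ C := fun x => by
    rw [Real.norm_of_nonneg (hφpos x).le]; exact hC x
  have nφ' : ∀ x, ‖deriv φ x‖ ≤ C := fun x => (hφ' x).trans (hC x)
  have mulφ : ∀ {f : ℝ → ℝ}, Integrable f → Integrable (fun x => φ x * f x) := fun hf =>
    hf.bdd_mul hφcont.aestronglyMeasurable (Filter.Eventually.of_forall nφ)
  -- The derivatives of the Schwartz functions, as Schwartz functions.
  obtain ⟨v1, hv1⟩ : ∃ u : 𝓢(ℝ, ℝ), ∀ x, u x = deriv (v : ℝ → ℝ) x :=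
    ⟨derivCLM ℝ ℝ v, fun x => derivCLM_apply ℝ v x⟩
  obtain ⟨w1, hw1⟩ : ∃ u : 𝓢(ℝ, ℝ), ∀ x, u x = deriv (w : ℝ → ℝ) x :=
    ⟨derivCLM ℝ ℝ w, fun x => derivCLM_apply ℝ w x⟩
  obtain ⟨h1, hh1⟩ : ∃ u : 𝓢(ℝ, ℝ), ∀ x, u x = deriv (h : ℝ → ℝ) x :=
    ⟨derivCLM ℝ ℝ h, fun x => derivCLM_apply ℝ h x⟩
  obtain ⟨v2, hv2⟩ : ∃ u : 𝓢(ℝ, ℝ), ∀ x, u x = deriv (v1 : ℝ → ℝ) x :=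
    ⟨derivCLM ℝ ℝ v1, fun x => derivCLM_apply ℝ v1 x⟩
  simp only [← hv1, ← hw1, ← hh1]
  have sq : ∀ u : 𝓢(ℝ, ℝ), Integrable (fun x => (u x) ^ 2) := fun u =>
    (u.memLp 2 volume).integrable_sq
  have hd : ∀ x, HasDerivAt (fun z => φ z * v1 z) (deriv φ x * v1 x + φ x * v2 x) x := fun x => by
    rw [hv2]
    exact (hφd x).hasDerivAt.mul v1.differentiableAt.hasDerivAt
  have ig : Integrable (fun z => φ z * v1 z) := mulφ v1.integrable
  have ig' : Integrable (fun x => deriv φ x * v1 x + φ x * v2 x) :=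
    (v1.integrable.bdd_mul hφ'cont.aestronglyMeasurable
      (Filter.Eventually.of_forall nφ')).add (mulφ v2.integrable)
  have if0 : Integrable (fun y => w y * h y) :=
    (w.memLp 2 volume).integrable_mul (h.memLp 2 volume)
  set N := Real.sqrt (∫ x : ℝ, ((v x)^2 + (v1 x)^2)) with hN
  have hinner : ∀ y, |∫ x : ℝ, Real.exp (-|x - y|) * (deriv φ x * v1 x + φ x * v2 x)|
      ≤ Real.sqrt (2 * K) * φ y * N := fun y => by
    refine (abs_integral_kernel_deriv_le hd ig ig' y).trans ?_
    have a0 : ∀ x, 0 ≤ Real.exp (-|x - y|) * φ x := fun x =>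
      mul_nonneg (Real.exp_pos _).le (hφpos x).le
    have ia : Integrable (fun x => Real.exp (-|x - y|) * φ x) :=
      (integrable_kernel y).mul_bdd hφcont.aestronglyMeasurable (Filter.Eventually.of_forall nφ)
    have ha : ∀ x, (Real.exp (-|x - y|) * φ x) ^ 2 ≤ φ y * (Real.exp (-|x - y|) * φ x) :=
      fun x => by
        rw [pow_two]
        exact mul_le_mul_of_nonneg_right (harnack hφd hφ' x y) (a0 x)
    have isq : Integrable (fun x => (Real.exp (-|x - y|) * φ x) ^ 2) :=
      (ia.const_mul (φ y)).mono' (by fun_prop) (Filter.Eventually.of_forall fun x => by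
        rw [Real.norm_of_nonneg (sq_nonneg _)]; exact ha x)
    have mL : MemLp (fun x => Real.exp (-|x - y|) * φ x) 2 :=
      (memLp_two_iff_integrable_sq (by fun_prop)).2 isq
    have cs := integral_mul_le_sqrt a0 (fun x => abs_nonneg (v1 x)) mL (v1.memLp 2 volume).abs
    have hA : (∫ x, (Real.exp (-|x - y|) * φ x) ^ 2) ≤ 2 * K * φ y ^ 2 := by
      have h1 := integral_mono isq (ia.const_mul (φ y)) ha
      rw [integral_const_mul] at h1
      have h2 := hker y
      simp only [abs_sub_comm y] at h2
      nlinarith [mul_le_mul_of_nonneg_left h2 (hφpos y).le]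
    have hB : Real.sqrt (∫ x, |v1 x| ^ 2) ≤ N := by
      refine Real.sqrt_le_sqrt (integral_mono ?_ ((sq v).add (sq v1)) fun x => ?_)
      · simpa using sq v1
      · simpa using sq_nonneg (v x)
    calc (∫ x, Real.exp (-|x - y|) * |φ x * v1 x|)
        = ∫ x, (Real.exp (-|x - y|) * φ x) * |v1 x| := by
          congr 1; ext x; rw [abs_mul, abs_of_pos (hφpos x), mul_assoc]
      _ ≤ _ := cs
      _ ≤ Real.sqrt (2 * K * φ y ^ 2) * N := by gcongr
      _ = _ := by rw [Real.sqrt_mul (by positivity), Real.sqrt_sq (hφpos y).le]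
  -- Fubini moves the kernel from `w h` onto `(φ v')'`.
  have hswap : (∫ x : ℝ, deriv (fun z => φ z * v1 z) x
        * ((1/2) * ∫ y : ℝ, Real.exp (-|x - y|) * (w y * h y)))
      = ∫ y : ℝ, (1/2) * (w y * h y)
        * ∫ x : ℝ, Real.exp (-|x - y|) * (deriv φ x * v1 x + φ x * v2 x) := by
    simp only [fun x => (hd x).deriv, ← integral_const_mul]
    rw [integral_integral_swap]
    · congr 1; ext y; congr 1; ext x; ring
    · have hp := (ig'.mul_prod (if0.const_mul (1/2)))
      have hp2 := hp.bdd_mul (f := fun z : ℝ × ℝ => Real.exp (-|z.1 - z.2|)) (c := 1)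
        (by fun_prop)
        (Filter.Eventually.of_forall fun z => by
          rw [Real.norm_of_nonneg (Real.exp_pos _).le]
          exact Real.exp_le_one_iff.2 (by simp))
      refine hp2.congr (Filter.Eventually.of_forall fun z => ?_)
      simp only [Function.uncurry]
      ring
  have iS : Integrable (fun x => φ x * ((w x)^2 + (w1 x)^2 + (h x)^2 + (h1 x)^2)) :=
    mulφ ((((sq w).add (sq w1)).add (sq h)).add (sq h1))
  have hN0 : 0 ≤ N := Real.sqrt_nonneg _
  have hsK : Real.sqrt (2 * K) ≤ 8 * (1 + K) := by
    rw [Real.sqrt_le_left (by positivity)]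
    nlinarith
  rw [hswap, ← integral_const_mul, ← Real.norm_eq_abs]
  refine norm_integral_le_of_norm_le (iS.const_mul _) (Filter.Eventually.of_forall fun y => ?_)
  rw [Real.norm_eq_abs, abs_mul, abs_mul, abs_of_pos (by norm_num : (0:ℝ) < 1/2)]
  have hwh : |w y * h y| ≤ ((w y)^2 + (w1 y)^2 + (h y)^2 + (h1 y)^2) / 2 := by
    rw [abs_le]
    constructor <;>
      nlinarith [sq_nonneg (w y + h y), sq_nonneg (w y - h y), sq_nonneg (w1 y), sq_nonneg (h1 y)]
  have hφy := hφpos y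
  calc 1 / 2 * |w y * h y|
        * |∫ x : ℝ, Real.exp (-|x - y|) * (deriv φ x * v1 x + φ x * v2 x)|
      ≤ 1 / 2 * (((w y)^2 + (w1 y)^2 + (h y)^2 + (h1 y)^2) / 2)
        * (8 * (1 + K) * φ y * N) := by
        refine mul_le_mul (by gcongr) ((hinner y).trans (by gcongr)) (abs_nonneg _) (by positivity)
    _ = _ := by ring
end

section
/- Let a, c ∈ ℝ and let u, η, p, q, U, N, P, Q be Schwartz functions on ℝ satisfying p − p'' = −(a u''' + u' + (uη)'), q − q'' = −(c η''' + η' + u u'), U − U'' = u, N − N'' = η, P − P'' = uη, and Q − Q'' = u². Let φ : ℝ → ℝ be a smooth function all of whose derivatives (including φ itself) are bounded. Then ∫ φ (q η + u p + q' η' + u' p') = −(a/2) ∫ φ' (u')² − (c/2) ∫ φ' (η')² − (a + 1/2) ∫ φ' u² − (c + 1/2) ∫ φ' η² + (1 + a) ∫ φ' u U + (1 + c) ∫ φ' η N − (1/2) ∫ φ' u² η + ∫ φ' u P + (1/2) ∫ φ' η Q. -/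
/-!
The integrand multiplying `φ` is an exact derivative. Using the equations to replace `p''` and `q''`,
`q η + u p + q' η' + u' p' = S'` with
`S = u p' + η q' - a (u u'' - u'² / 2) - c (η η'' - η'² / 2) - u² / 2 - η² / 2 - u² η`,
so integrating by parts once (`integral_mul_deriv_schwartz`) the left-hand side is `-∫ φ' S`.

It remains to express `p'` and `q'` in `S` through the canonical variables. The operator `1 - ∂²` is
injective on Schwartz functions (`eq_zero_of_deriv_deriv_eq`, an energy argument), hence
`p = a u' - (1 + a) U' - P'` and similarly for `q` (`eq_of_canonical`). Differentiating once more
and using `U'' = U - u`, etc. turns `-S` into the density on the right-hand side.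

All functions except `φ` stay inside the Schwartz space, on which `∂` is a linear map satisfying
the Leibniz rule; this makes the identities purely algebraic.
-/

open MeasureTheory SchwartzMap

/-- Differentiation as a linear endomorphism of the Schwartz space. -/
noncomputable abbrev schwartzD : 𝓢(ℝ, ℝ) →L[ℝ] 𝓢(ℝ, ℝ) := derivCLM ℝ ℝ

/-- The pointwise product of two real Schwartz functions, as a Schwartz function. It is encoded as
multiplication by `f`, a function of temperate growth. -/
noncomputable def schwartzMul (f g : 𝓢(ℝ, ℝ)) : 𝓢(ℝ, ℝ) := smulLeftCLM ℝ (f : ℝ → ℝ) g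

@[simp] lemma schwartzMul_apply (f g : 𝓢(ℝ, ℝ)) (x : ℝ) : schwartzMul f g x = f x * g x := by
  simp [schwartzMul, smulLeftCLM_apply_apply f.hasTemperateGrowth]

lemma schwartzD_mul_apply (f g : 𝓢(ℝ, ℝ)) (x : ℝ) :
    schwartzD (schwartzMul f g) x = schwartzD f x * g x + f x * schwartzD g x := by
  have h : (schwartzMul f g : ℝ → ℝ) = fun y => f y * g y := by
    ext y
    simp
  rw [derivCLM_apply, h]
  exact ((f.hasDerivAt x).mul (g.hasDerivAt x)).deriv

lemma integrable_bounded_mul {ψ : ℝ → ℝ} (hψ : Continuous ψ) (hb : ∃ C : ℝ, ∀ x, |ψ x| ≤ C)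
    (f : 𝓢(ℝ, ℝ)) : Integrable (fun x => ψ x * f x) := by
  obtain ⟨C, hC⟩ := hb
  exact f.integrable.bdd_mul (c := C) hψ.aestronglyMeasurable (Filter.Eventually.of_forall hC)

/-- Integration by parts against a function that is merely bounded with bounded derivative. -/
lemma integral_mul_deriv_schwartz {φ : ℝ → ℝ} (hφ : ContDiff ℝ 1 φ)
    (h0 : ∃ C : ℝ, ∀ x, |φ x| ≤ C) (h1 : ∃ C : ℝ, ∀ x, |deriv φ x| ≤ C) (S : 𝓢(ℝ, ℝ)) :
    ∫ x, φ x * schwartzD S x = -∫ x, deriv φ x * S x := by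
  have hc' : Continuous (deriv φ) := hφ.continuous_deriv le_rfl
  have i1 := integrable_bounded_mul hc' h1 S
  have i2 := integrable_bounded_mul hφ.continuous h0 (schwartzD S)
  have h := integral_eq_zero_of_hasDerivAt_of_integrable
    (fun x => ((hφ.differentiable one_ne_zero x).hasDerivAt).mul (S.hasDerivAt x))
    (i1.add i2) (integrable_bounded_mul hφ.continuous h0 S)
  have h2 := integral_add i1 i2
  simp only [derivCLM_apply] at h2 ⊢
  linarith

/-- A Schwartz solution of `F'' = F` vanishes: `(F F')' = F'² + F²` is nonnegative and has
integral zero. -/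
lemma eq_zero_of_deriv_deriv_eq (F : 𝓢(ℝ, ℝ)) (hF : F - schwartzD (schwartzD F) = 0) : F = 0 := by
  have hF' : ∀ x, schwartzD (schwartzD F) x = F x := fun x => by
    rw [← sub_eq_zero.mp hF]
  set H := schwartzMul F (schwartzD F) with hH
  have hd : ∀ x, schwartzD H x = schwartzD F x ^ 2 + F x ^ 2 := fun x => by
    rw [hH, schwartzD_mul_apply, hF']
    ring
  have hint : ∫ x, schwartzD H x = 0 :=
    integral_eq_zero_of_hasDerivAt_of_integrable (fun x => H.hasDerivAt x)
      (schwartzD H).integrable H.integrable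
  have hnn : 0 ≤ (schwartzD H : ℝ → ℝ) := fun x => by
    rw [hd]
    positivity
  have hae := (integral_eq_zero_iff_of_nonneg hnn (schwartzD H).integrable).mp hint
  have hz := (Continuous.ae_eq_iff_eq volume (schwartzD H).continuous continuous_zero).mp hae
  ext x
  have hx : schwartzD H x = 0 := congrFun hz x
  rw [hd] at hx
  have : F x ^ 2 = 0 := by nlinarith [sq_nonneg (schwartzD F x), sq_nonneg (F x)]
  simpa using this

/-- Solving `(1 - ∂²) w = -∂ (k v'' + v + z)` in terms of the canonical variables `V` of `v` and
`Z` of `z`. -/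
lemma eq_of_canonical {k : ℝ} {w v z V Z : 𝓢(ℝ, ℝ)}
    (hw : w - schwartzD (schwartzD w) =
      -(k • schwartzD (schwartzD (schwartzD v)) + schwartzD v + schwartzD z))
    (hV : V - schwartzD (schwartzD V) = v) (hZ : Z - schwartzD (schwartzD Z) = z) :
    w = k • schwartzD v - (1 + k) • schwartzD V - schwartzD Z := by
  have hV' := congrArg schwartzD hV
  have hZ' := congrArg schwartzD hZ
  rw [← sub_eq_zero]
  apply eq_zero_of_deriv_deriv_eq
  simp only [map_sub, map_smul] at hV' hZ' ⊢
  linear_combination (norm := module) hw + (1 + k) • hV' + hZ'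

/-- The derivative of the solution of `(1 - ∂²) w = -∂ (k v'' + v + z)`, in which the canonical
variables appear undifferentiated. -/
lemma deriv_of_canonical {k : ℝ} {w v z V Z : 𝓢(ℝ, ℝ)}
    (hw : w - schwartzD (schwartzD w) =
      -(k • schwartzD (schwartzD (schwartzD v)) + schwartzD v + schwartzD z))
    (hV : V - schwartzD (schwartzD V) = v) (hZ : Z - schwartzD (schwartzD Z) = z) :
    schwartzD w = k • schwartzD (schwartzD v) - (1 + k) • (V - v) - (Z - z) := by
  have h := congrArg schwartzD (eq_of_canonical hw hV hZ)
  simp only [map_sub, map_smul] at h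
  linear_combination (norm := module) h + (1 + k) • hV + hZ

/-- Virial identity for `I(t) = ∫ φ (uη + u_x η_x)` along the abcd Boussinesq flow:
with `p = ∂_t η`, `q = ∂_t u` determined by the system, and canonical variables
`U, N, P, Q` of `u, η, uη, u²`. -/
theorem stmt_14 (a c : ℝ) (u η p q U N P Q : 𝓢(ℝ, ℝ))
    (hp : ∀ x, p x - deriv (deriv (p : ℝ → ℝ)) x =
      -(a * deriv (deriv (deriv (u : ℝ → ℝ))) x + deriv (u : ℝ → ℝ) x
        + deriv (fun y => u y * η y) x))
    (hq : ∀ x, q x - deriv (deriv (q : ℝ → ℝ)) x =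
      -(c * deriv (deriv (deriv (η : ℝ → ℝ))) x + deriv (η : ℝ → ℝ) x
        + u x * deriv (u : ℝ → ℝ) x))
    (hU : ∀ x, U x - deriv (deriv (U : ℝ → ℝ)) x = u x)
    (hN : ∀ x, N x - deriv (deriv (N : ℝ → ℝ)) x = η x)
    (hP : ∀ x, P x - deriv (deriv (P : ℝ → ℝ)) x = u x * η x)
    (hQ : ∀ x, Q x - deriv (deriv (Q : ℝ → ℝ)) x = (u x)^2)
    (φ : ℝ → ℝ) (hφ : ContDiff ℝ (⊤ : ℕ∞) φ)
    (hbd : ∀ n : ℕ, ∃ C : ℝ, ∀ x : ℝ, |iteratedDeriv n φ x| ≤ C) :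
    (∫ x : ℝ, φ x * (q x * η x + u x * p x
        + deriv (q : ℝ → ℝ) x * deriv (η : ℝ → ℝ) x
        + deriv (u : ℝ → ℝ) x * deriv (p : ℝ → ℝ) x))
    = -(a/2) * (∫ x : ℝ, deriv φ x * (deriv (u : ℝ → ℝ) x)^2)
      - (c/2) * (∫ x : ℝ, deriv φ x * (deriv (η : ℝ → ℝ) x)^2)
      - (a + 1/2) * (∫ x : ℝ, deriv φ x * (u x)^2)
      - (c + 1/2) * (∫ x : ℝ, deriv φ x * (η x)^2)
      + (1 + a) * (∫ x : ℝ, deriv φ x * (u x * U x))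
      + (1 + c) * (∫ x : ℝ, deriv φ x * (η x * N x))
      - (1/2) * (∫ x : ℝ, deriv φ x * ((u x)^2 * η x))
      + (∫ x : ℝ, deriv φ x * (u x * P x))
      + (1/2) * (∫ x : ℝ, deriv φ x * (η x * Q x)) := by
  have hp' : p - schwartzD (schwartzD p) =
      -(a • schwartzD (schwartzD (schwartzD u)) + schwartzD u + schwartzD (schwartzMul u η)) := by
    ext x
    have hm : (schwartzMul u η : ℝ → ℝ) = fun y => u y * η y := by
      ext y
      simp
    have h := hp x
    rw [← hm] at h
    exact h
  have hq' : q - schwartzD (schwartzD q) =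
      -(c • schwartzD (schwartzD (schwartzD η)) + schwartzD η
        + schwartzD ((1 / 2 : ℝ) • schwartzMul u u)) := by
    ext x
    have h : q x - schwartzD (schwartzD q) x =
      -(c * schwartzD (schwartzD (schwartzD η)) x + schwartzD η x + u x * schwartzD u x) := hq x
    rw [map_smul]
    simp only [sub_apply, neg_apply, add_apply, smul_apply, smul_eq_mul, schwartzD_mul_apply]
    linear_combination h
  have hU' : U - schwartzD (schwartzD U) = u := by
    ext x
    exact hU x
  have hN' : N - schwartzD (schwartzD N) = η := by
    ext x
    exact hN x
  have hP' : P - schwartzD (schwartzD P) = schwartzMul u η := by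
    ext x
    rw [schwartzMul_apply]
    exact hP x
  have hQ' : (1 / 2 : ℝ) • Q - schwartzD (schwartzD ((1 / 2 : ℝ) • Q))
      = (1 / 2 : ℝ) • schwartzMul u u := by
    rw [map_smul, map_smul, ← smul_sub]
    congr 1
    ext x
    rw [schwartzMul_apply, ← sq]
    exact hQ x
  have hDp := fun x => DFunLike.congr_fun (deriv_of_canonical hp' hU' hP') x
  have hDq := fun x => DFunLike.congr_fun (deriv_of_canonical hq' hN' hQ') x
  have hpx := fun x => DFunLike.congr_fun hp' x
  have hqx := fun x => DFunLike.congr_fun hq' x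
  simp only [map_smul, sub_apply, neg_apply, add_apply, smul_apply, smul_eq_mul, schwartzMul_apply,
    schwartzD_mul_apply] at hDp hDq hpx hqx
  have h0 : ∃ C : ℝ, ∀ x, |φ x| ≤ C := by simpa using hbd 0
  have h1 : ∃ C : ℝ, ∀ x, |deriv φ x| ≤ C := by simpa [iteratedDeriv_one] using hbd 1
  have hφ1 : ContDiff ℝ 1 φ := hφ.of_le (by exact_mod_cast le_top)
  have hc' : Continuous (deriv φ) := hφ1.continuous_deriv le_rfl
  -- The primitive of the integrand.
  set S : 𝓢(ℝ, ℝ) := schwartzMul u (schwartzD p) + schwartzMul η (schwartzD q)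
    - a • (schwartzMul u (schwartzD (schwartzD u))
      - (1 / 2 : ℝ) • schwartzMul (schwartzD u) (schwartzD u))
    - c • (schwartzMul η (schwartzD (schwartzD η))
      - (1 / 2 : ℝ) • schwartzMul (schwartzD η) (schwartzD η))
    - (1 / 2 : ℝ) • schwartzMul u u - (1 / 2 : ℝ) • schwartzMul η η
    - schwartzMul (schwartzMul u u) η with hS
  have hDS : ∀ x, q x * η x + u x * p x + deriv (q : ℝ → ℝ) x * deriv (η : ℝ → ℝ) x
        + deriv (u : ℝ → ℝ) x * deriv (p : ℝ → ℝ) x = schwartzD S x := fun x => by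
    simp only [hS, map_add, map_sub, map_smul, sub_apply, add_apply, smul_apply, smul_eq_mul,
      schwartzD_mul_apply, schwartzMul_apply]
    simp only [← derivCLM_apply ℝ]
    linear_combination u x * hpx x + η x * hqx x
  -- Substituting the formulas for `p'` and `q'` into `S`.
  have hSx : S = (a/2) • schwartzMul (schwartzD u) (schwartzD u)
      + (c/2) • schwartzMul (schwartzD η) (schwartzD η)
      + (a + 1/2) • schwartzMul u u + (c + 1/2) • schwartzMul η η
      - (1 + a) • schwartzMul u U - (1 + c) • schwartzMul η N
      + (1/2 : ℝ) • schwartzMul (schwartzMul u u) η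
      - schwartzMul u P - (1/2 : ℝ) • schwartzMul η Q := by
    ext x
    simp only [hS, sub_apply, add_apply, smul_apply, smul_eq_mul, schwartzMul_apply]
    rw [hDp x, hDq x]
    ring
  have hI := fun f : 𝓢(ℝ, ℝ) => integrable_bounded_mul hc' h1 f
  have hadd : ∀ f g : 𝓢(ℝ, ℝ), ∫ x, deriv φ x * (f + g) x
      = (∫ x, deriv φ x * f x) + ∫ x, deriv φ x * g x := fun f g => by
    simp only [add_apply, mul_add]
    exact integral_add (hI f) (hI g)
  have hsub : ∀ f g : 𝓢(ℝ, ℝ), ∫ x, deriv φ x * (f - g) x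
      = (∫ x, deriv φ x * f x) - ∫ x, deriv φ x * g x := fun f g => by
    simp only [sub_apply, mul_sub]
    exact integral_sub (hI f) (hI g)
  have hsmul : ∀ (k : ℝ) (f : 𝓢(ℝ, ℝ)), ∫ x, deriv φ x * (k • f) x
      = k * ∫ x, deriv φ x * f x := fun k f => by
    simp only [smul_apply, smul_eq_mul, mul_left_comm _ k]
    exact integral_const_mul _ _
  have key := integral_mul_deriv_schwartz hφ1 h0 h1 S
  simp only [← hDS] at key
  rw [key, hSx]
  simp only [hadd, hsub, hsmul, schwartzMul_apply, derivCLM_apply, ← sq]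
  ring
end

section
/- Let a, c ∈ ℝ and let u, η, p, q, U, N, P, Q be Schwartz functions on ℝ satisfying p − p'' = −(a u''' + u' + (uη)'), q − q'' = −(c η''' + η' + u u'), U − U'' = u, N − N'' = η, P − P'' = uη, and Q − Q'' = u². Let φ : ℝ → ℝ be a smooth function all of whose derivatives (including φ itself) are bounded. Then ∫ φ' (p u' + η q') = (1 + c) ∫ φ' η² − c ∫ φ' (η')² − (1 + a) ∫ φ' u² + a ∫ φ' (u')² − (1 + c) ∫ φ' η N + (1 + a) ∫ φ' u U + (1 + a) ∫ φ'' u U' + (c/2) ∫ φ''' η² − (1/2) ∫ φ' u² η − (1/2) ∫ φ' η Q + ∫ φ' u P + ∫ φ'' u P'. -/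
/-!
The operator `1 - ∂²` is injective on Schwartz functions: if `F = F''`, then
`∫ F² = ∫ F F'' = -∫ (F')²`, so `F = 0`. Writing `a u''' = a u' - a (1 - ∂²) u'`, and similarly
for `η`, this inverts the system explicitly:
`p = a u' - (1 + a) U' - P'` and `q = c η' - (1 + c) N' - Q' / 2`
(`inverse_formula`).

Substituting these into `∫ φ' (p u' + η q')` leaves three terms to integrate by parts against a
bounded weight (`wInt_mul_deriv`): `φ' u' U'`, `φ' u' P'` and `φ' η η''`. The second derivatives
of the canonical variables are removed by `U'' = U - u`, `N'' = N - η`, `P'' = P - u η`,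
`Q'' = Q - u²`. To keep this purely algebraic, derivatives and products are taken inside the
Schwartz space, and integration against a weight is a linear functional on it.
-/

open MeasureTheory SchwartzMap

namespace Virial

/-- Differentiation as an endomorphism of the Schwartz space. -/
noncomputable abbrev D : 𝓢(ℝ, ℝ) →L[ℝ] 𝓢(ℝ, ℝ) := derivCLM ℝ ℝ

/-- The pointwise product of Schwartz functions, linear in each argument. -/
noncomputable abbrev M : 𝓢(ℝ, ℝ) →ₗ[ℝ] 𝓢(ℝ, ℝ) →L[ℝ] 𝓢(ℝ, ℝ) :=
  pairing (ContinuousLinearMap.mul ℝ ℝ)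

lemma M_apply (f h : 𝓢(ℝ, ℝ)) (x : ℝ) : M f h x = f x * h x := rfl

lemma coe_D (f : 𝓢(ℝ, ℝ)) : (D f : ℝ → ℝ) = deriv f := rfl

lemma M_comm (f h : 𝓢(ℝ, ℝ)) : M f h = M h f := by
  ext x; simp only [M_apply, mul_comm]

lemma D_M (f h : 𝓢(ℝ, ℝ)) : D (M f h) = M (D f) h + M f (D h) := by
  ext x
  exact ((f.hasDerivAt x).mul (h.hasDerivAt x)).deriv

/-- `1 - ∂²` is injective on Schwartz functions. -/
lemma eq_zero_of_sub_D_D (F : 𝓢(ℝ, ℝ)) (h : F - D (D F) = 0) : F = 0 := by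
  have hDD : D (D F) = F := (sub_eq_zero.1 h).symm
  have hparts := integral_mul_deriv_eq_neg_deriv_mul F (D F)
  have hDDx : deriv (D F : ℝ → ℝ) = F := by rw [← coe_D, hDD]
  rw [hDDx, ← coe_D] at hparts
  have hDF : 0 ≤ ∫ x, D F x * D F x := integral_nonneg fun x => mul_self_nonneg _
  have hF : 0 ≤ ∫ x, F x * F x := integral_nonneg fun x => mul_self_nonneg _
  have hzero : ∫ x, F x * F x = 0 := by linarith
  have hae := (integral_eq_zero_iff_of_nonneg (fun x => mul_self_nonneg (F x))
    (M F F).integrable).1 hzero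
  have hall := (Continuous.ae_eq_iff_eq volume (F.continuous.mul F.continuous)
    continuous_zero).1 hae
  ext x
  exact mul_self_eq_zero.1 (congrFun hall x)

/-- Solves `(1 - ∂²) p = -(b v''' + v' + k w')` for `p` in terms of the canonical variables
`V` of `v` and `W` of `w`. -/
lemma inverse_formula (b k : ℝ) {p v w V W : 𝓢(ℝ, ℝ)}
    (hp : p - D (D p) = -(b • D (D (D v)) + D v + k • D w))
    (hV : V - D (D V) = v) (hW : W - D (D W) = w) :
    p = b • D v - (1 + b) • D V - k • D W := by
  rw [← sub_eq_zero]
  apply eq_zero_of_sub_D_D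
  have hV' := congrArg D hV
  have hW' := congrArg D hW
  simp only [map_sub, map_smul] at hV' hW' ⊢
  ext x
  have h1 := DFunLike.congr_fun hp x
  have h2 := DFunLike.congr_fun hV' x
  have h3 := DFunLike.congr_fun hW' x
  simp only [sub_apply, add_apply, neg_apply, smul_apply, smul_eq_mul, zero_apply] at h1 h2 h3 ⊢
  linear_combination h1 + (1 + b) * h2 + k * h3

/-- A continuous bounded function, admissible as a weight. -/
def IsWeight (g : ℝ → ℝ) : Prop := Continuous g ∧ ∃ C : ℝ, ∀ x, |g x| ≤ C

lemma IsWeight.integrable {g : ℝ → ℝ} (hg : IsWeight g) (F : 𝓢(ℝ, ℝ)) :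
    Integrable fun x => g x * F x := by
  obtain ⟨hc, C, hC⟩ := hg
  exact F.integrable.bdd_mul hc.aestronglyMeasurable (Filter.Eventually.of_forall hC)

/-- The linear functional `F ↦ ∫ g F` on the Schwartz space, for a weight `g`. -/
noncomputable def wInt {g : ℝ → ℝ} (hg : IsWeight g) : 𝓢(ℝ, ℝ) →ₗ[ℝ] ℝ where
  toFun F := ∫ x, g x * F x
  map_add' F G := by
    simp only [add_apply, mul_add]
    exact integral_add (hg.integrable F) (hg.integrable G)
  map_smul' r F := by
    simp only [smul_apply, smul_eq_mul, RingHom.id_apply, mul_left_comm _ r]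
    exact integral_const_mul _ _

lemma wInt_apply {g : ℝ → ℝ} (hg : IsWeight g) (F : 𝓢(ℝ, ℝ)) :
    wInt hg F = ∫ x, g x * F x := rfl

lemma wInt_D {g : ℝ → ℝ} (hd : Differentiable ℝ g) (hg : IsWeight g)
    (hg' : IsWeight (deriv g)) (F : 𝓢(ℝ, ℝ)) : wInt hg (D F) = -wInt hg' F := by
  have h := integral_eq_zero_of_hasDerivAt_of_integrable
    (fun x => (hd x).hasDerivAt.mul (F.hasDerivAt x))
    ((hg'.integrable F).add (hg.integrable (D F))) (hg.integrable F)
  have h2 := integral_add (hg'.integrable F) (hg.integrable (D F))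
  rw [wInt_apply, wInt_apply]
  have h3 := h2.symm.trans h
  linarith

/-- Weighted integration by parts, `∫ g f h' = -∫ g' f h - ∫ g f' h`. -/
lemma wInt_mul_deriv {g : ℝ → ℝ} (hd : Differentiable ℝ g) (hg : IsWeight g)
    (hg' : IsWeight (deriv g)) (f h : 𝓢(ℝ, ℝ)) :
    wInt hg (M f (D h)) = -wInt hg' (M f h) - wInt hg (M (D f) h) := by
  have := wInt_D hd hg hg' (M f h)
  rw [D_M, map_add] at this
  linarith

lemma isWeight_iteratedDeriv {φ : ℝ → ℝ} (hφ : ContDiff ℝ (⊤ : ℕ∞) φ)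
    (hbd : ∀ n : ℕ, ∃ C : ℝ, ∀ x : ℝ, |iteratedDeriv n φ x| ≤ C) (n : ℕ) :
    IsWeight (iteratedDeriv n φ) :=
  ⟨hφ.continuous_iteratedDeriv n (by exact_mod_cast le_top), hbd n⟩

end Virial

open Virial in
/-- Virial identity for `J(t) = ∫ φ' η u_x` along the abcd Boussinesq flow:
with `p = ∂_t η`, `q = ∂_t u` determined by the system, and canonical variables
`U, N, P, Q` of `u, η, uη, u²`. -/
theorem stmt_15 (a c : ℝ) (u η p q U N P Q : 𝓢(ℝ, ℝ))
    (hp : ∀ x, p x - deriv (deriv (p : ℝ → ℝ)) x =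
      -(a * deriv (deriv (deriv (u : ℝ → ℝ))) x + deriv (u : ℝ → ℝ) x
        + deriv (fun y => u y * η y) x))
    (hq : ∀ x, q x - deriv (deriv (q : ℝ → ℝ)) x =
      -(c * deriv (deriv (deriv (η : ℝ → ℝ))) x + deriv (η : ℝ → ℝ) x
        + u x * deriv (u : ℝ → ℝ) x))
    (hU : ∀ x, U x - deriv (deriv (U : ℝ → ℝ)) x = u x)
    (hN : ∀ x, N x - deriv (deriv (N : ℝ → ℝ)) x = η x)
    (hP : ∀ x, P x - deriv (deriv (P : ℝ → ℝ)) x = u x * η x)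
    (hQ : ∀ x, Q x - deriv (deriv (Q : ℝ → ℝ)) x = (u x)^2)
    (φ : ℝ → ℝ) (hφ : ContDiff ℝ (⊤ : ℕ∞) φ)
    (hbd : ∀ n : ℕ, ∃ C : ℝ, ∀ x : ℝ, |iteratedDeriv n φ x| ≤ C) :
    (∫ x : ℝ, deriv φ x * (p x * deriv (u : ℝ → ℝ) x + η x * deriv (q : ℝ → ℝ) x))
    = (1 + c) * (∫ x : ℝ, deriv φ x * (η x)^2)
      - c * (∫ x : ℝ, deriv φ x * (deriv (η : ℝ → ℝ) x)^2)
      - (1 + a) * (∫ x : ℝ, deriv φ x * (u x)^2)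
      + a * (∫ x : ℝ, deriv φ x * (deriv (u : ℝ → ℝ) x)^2)
      - (1 + c) * (∫ x : ℝ, deriv φ x * (η x * N x))
      + (1 + a) * (∫ x : ℝ, deriv φ x * (u x * U x))
      + (1 + a) * (∫ x : ℝ, deriv (deriv φ) x * (u x * deriv (U : ℝ → ℝ) x))
      + (c/2) * (∫ x : ℝ, deriv (deriv (deriv φ)) x * (η x)^2)
      - (1/2) * (∫ x : ℝ, deriv φ x * ((u x)^2 * η x))
      - (1/2) * (∫ x : ℝ, deriv φ x * (η x * Q x))
      + (∫ x : ℝ, deriv φ x * (u x * P x))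
      + (∫ x : ℝ, deriv (deriv φ) x * (u x * deriv (P : ℝ → ℝ) x)) := by
  have hpS : p - D (D p) = -(a • D (D (D u)) + D u + (1 : ℝ) • D (M u η)) := by
    ext x
    rw [one_smul]
    exact hp x
  have hqS : q - D (D q) = -(c • D (D (D η)) + D η + (1 / 2 : ℝ) • D (M u u)) := by
    ext x
    have h := hq x
    have hx : D (M u u) x = 2 * (u x * deriv u x) := by
      rw [D_M]
      change deriv u x * u x + u x * deriv u x = _
      ring
    change q x - deriv (deriv q) x =
      -(c * deriv (deriv (deriv η)) x + deriv η x + (1 / 2) * D (M u u) x)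
    rw [hx, h]
    ring
  have hUS : U - D (D U) = u := by ext x; exact hU x
  have hNS : N - D (D N) = η := by ext x; exact hN x
  have hPS : P - D (D P) = M u η := by ext x; exact hP x
  have hQS : Q - D (D Q) = M u u := by ext x; exact (hQ x).trans (sq _)
  have hpF := inverse_formula a 1 hpS hUS hPS
  have hqF := congrArg D (inverse_formula c (1 / 2) hqS hNS hQS)
  have hUD : D (D U) = U - u := by rw [← hUS]; abel
  have hND : D (D N) = N - η := by rw [← hNS]; abel
  have hPD : D (D P) = P - M u η := by rw [← hPS]; abel
  have hQD : D (D Q) = Q - M u u := by rw [← hQS]; abel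
  simp only [map_sub, map_smul, hND, hQD] at hqF
  have w1 : IsWeight (deriv φ) := by
    simpa [iteratedDeriv_succ] using isWeight_iteratedDeriv hφ hbd 1
  have w2 : IsWeight (deriv (deriv φ)) := by
    simpa [iteratedDeriv_succ] using isWeight_iteratedDeriv hφ hbd 2
  have w3 : IsWeight (deriv (deriv (deriv φ))) := by
    simpa [iteratedDeriv_succ] using isWeight_iteratedDeriv hφ hbd 3
  have d1 : Differentiable ℝ (deriv φ) := by
    simpa [iteratedDeriv_succ] using
      hφ.differentiable_iteratedDeriv 1 (WithTop.coe_lt_coe.2 (ENat.natCast_lt_top 1))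
  have d2 : Differentiable ℝ (deriv (deriv φ)) := by
    simpa [iteratedDeriv_succ] using
      hφ.differentiable_iteratedDeriv 2 (WithTop.coe_lt_coe.2 (ENat.natCast_lt_top 2))
  have eU := wInt_mul_deriv d1 w1 w2 (D U) u
  have eP := wInt_mul_deriv d1 w1 w2 (D P) u
  have eη := wInt_mul_deriv d1 w1 w2 η (D η)
  -- Since `η η' = (η²)' / 2`, this gives the term in `φ'''`.
  have eη' := wInt_mul_deriv d2 w2 w3 η η
  rw [hUD] at eU
  rw [hPD] at eP
  rw [M_comm (D η) η] at eη'
  have triple : M (M u η) u = M η (M u u) := by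
    ext x; simp only [M_apply]; ring
  have key : wInt w1 (M p (D u) + M η (D q))
      = (1 + c) * wInt w1 (M η η) - c * wInt w1 (M (D η) (D η))
        - (1 + a) * wInt w1 (M u u) + a * wInt w1 (M (D u) (D u))
        - (1 + c) * wInt w1 (M η N) + (1 + a) * wInt w1 (M u U)
        + (1 + a) * wInt w2 (M u (D U)) + (c / 2) * wInt w3 (M η η)
        - (1 / 2) * wInt w1 (M η (M u u)) - (1 / 2) * wInt w1 (M η Q)
        + wInt w1 (M u P) + wInt w2 (M u (D P)) := by
    rw [hpF, hqF, M_comm u U, M_comm u P, M_comm u (D U), M_comm u (D P)]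
    simp only [map_add, map_sub, map_smul, sub_apply, smul_apply,
      smul_eq_mul, triple] at eU eP eη eη' ⊢
    linear_combination (-(1 + a)) * eU - eP + c * eη - (c / 2) * eη'
  have cube : (fun x => deriv φ x * ((u x) ^ 2 * η x)) =
      fun x => deriv φ x * M η (M u u) x := by
    funext x; simp only [M_apply]; ring
  rw [cube]
  simp only [sq]
  exact key
end

section
/- Let a < 0, c < 0 and b ≥ 2/9 be real numbers with a + c = −2 + 1/(3b). Define w : ℝ → ℝ by w(k) = k (1 − a k²)^{1/2} (1 − c k²)^{1/2} / (1 + k²). Then w is differentiable on ℝ and w'(k) > 0 for every k ∈ ℝ; equivalently, the group velocity of linear waves of the rescaled abcd system never vanishes. In particular, for every k ∈ ℝ, a c k⁶ + 3 a c k⁴ − (1 + 2a + 2c) k² + 1 ≥ 1. -/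
/-!
The bound `b ≥ 2/9` says exactly that `1/(3b) ≤ 3/2`, i.e. `1 + 2a + 2c ≤ 0`. Since also `ac > 0`,
every non-constant coefficient of the polynomial `ack⁶ + 3ack⁴ - (1 + 2a + 2c)k² + 1` in `k²` is
nonnegative, so it is at least `1` (`one_le_numerator`). Because `1 - ak²` and `1 - ck²` are
positive, `w` is differentiable everywhere, and its derivative is this polynomial divided by the
positive quantity `(1 + k²)² √(1 - ak²) √(1 - ck²)` (`hasDerivAt_dispersion`).
-/

lemma one_sub_mul_sq_pos {a : ℝ} (ha : a < 0) (k : ℝ) : 0 < 1 - a * k ^ 2 := by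
  nlinarith [mul_nonneg (neg_nonneg.2 ha.le) (sq_nonneg k)]

lemma hasDerivAt_sqrt_one_sub_mul_sq {a : ℝ} (ha : a < 0) (k : ℝ) :
    HasDerivAt (fun x : ℝ => Real.sqrt (1 - a * x ^ 2))
      (-(a * k) / Real.sqrt (1 - a * k ^ 2)) k := by
  have h : HasDerivAt (fun x : ℝ => 1 - a * x ^ 2) (-(a * (2 * k))) k := by
    simpa using ((hasDerivAt_pow 2 k).const_mul a).const_sub 1
  convert h.sqrt (one_sub_mul_sq_pos ha k).ne' using 1
  have := (Real.sqrt_pos.2 (one_sub_mul_sq_pos ha k)).ne'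
  field_simp

lemma hasDerivAt_dispersion {a c : ℝ} (ha : a < 0) (hc : c < 0) (k : ℝ) :
    HasDerivAt
      (fun x : ℝ => x * Real.sqrt (1 - a * x ^ 2) * Real.sqrt (1 - c * x ^ 2) / (1 + x ^ 2))
      ((a * c * k ^ 6 + 3 * a * c * k ^ 4 - (1 + 2 * a + 2 * c) * k ^ 2 + 1) /
        ((1 + k ^ 2) ^ 2 * Real.sqrt (1 - a * k ^ 2) * Real.sqrt (1 - c * k ^ 2))) k := by
  have hk : 1 + k ^ 2 ≠ 0 := by positivity
  have hden : HasDerivAt (fun x : ℝ => 1 + x ^ 2) (2 * k) k := by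
    simpa using (hasDerivAt_pow 2 k).const_add 1
  have h := (((hasDerivAt_id' k).fun_mul (hasDerivAt_sqrt_one_sub_mul_sq ha k)).fun_mul
    (hasDerivAt_sqrt_one_sub_mul_sq hc k)).fun_div hden hk
  refine h.congr_deriv ?_
  have hA := (Real.sqrt_pos.2 (one_sub_mul_sq_pos ha k)).ne'
  have hC := (Real.sqrt_pos.2 (one_sub_mul_sq_pos hc k)).ne'
  have hA2 := Real.sq_sqrt (one_sub_mul_sq_pos ha k).le
  have hC2 := Real.sq_sqrt (one_sub_mul_sq_pos hc k).le
  -- With the roots as atoms `A`, `C`, only `A² = 1 - ak²` and `C² = 1 - ck²` are needed.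
  generalize Real.sqrt (1 - a * k ^ 2) = A at *
  generalize Real.sqrt (1 - c * k ^ 2) = C at *
  field_simp
  rw [hA2, hC2]
  ring

lemma one_le_numerator {a c : ℝ} (ha : a < 0) (hc : c < 0) (hac : 1 + 2 * a + 2 * c ≤ 0)
    (k : ℝ) : 1 ≤ a * c * k ^ 6 + 3 * a * c * k ^ 4 - (1 + 2 * a + 2 * c) * k ^ 2 + 1 := by
  have hp : 0 < a * c := mul_pos_of_neg_of_neg ha hc
  have h6 : 0 ≤ a * c * k ^ 6 := by positivity
  have h4 : 0 ≤ a * c * k ^ 4 := by positivity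
  have h2 := mul_nonneg (neg_nonneg.2 hac) (sq_nonneg k)
  linarith


/-- For dispersion-like parameters with `b ≥ 2/9`, the group velocity of linear waves of
the rescaled abcd system never vanishes: `w' > 0` everywhere, and the numerator polynomial
`ack⁶ + 3ack⁴ - (1 + 2a + 2c)k² + 1` is bounded below by `1`. -/
theorem stmt_18 (a c b : ℝ) (ha : a < 0) (hc : c < 0) (hb : b ≥ 2/9)
    (hac : a + c = -2 + 1/(3*b))
    (w : ℝ → ℝ)
    (hw : ∀ k, w k = k * Real.sqrt (1 - a*k^2) * Real.sqrt (1 - c*k^2) / (1 + k^2)) :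
    (Differentiable ℝ w ∧ ∀ k : ℝ, deriv w k > 0) ∧
    ∀ k : ℝ, a*c*k^6 + 3*a*c*k^4 - (1 + 2*a + 2*c)*k^2 + 1 ≥ 1 := by

  have hs : 1 + 2 * a + 2 * c ≤ 0 := by
    have h : 1 / (3 * b) ≤ 3 / 2 := by
      rw [div_le_iff₀ (by linarith)]
      linarith
    linarith
  obtain rfl : w = _ := funext hw
  have hd := hasDerivAt_dispersion ha hc
  refine ⟨⟨fun k => (hd k).differentiableAt, fun k => ?_⟩, one_le_numerator ha hc hs⟩
  rw [(hd k).deriv]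
  have hA := Real.sqrt_pos.2 (one_sub_mul_sq_pos ha k)
  have hC := Real.sqrt_pos.2 (one_sub_mul_sq_pos hc k)
  have hN := one_le_numerator ha hc hs k
  exact div_pos (by linarith) (by positivity)
end
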